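/- arXiv:1702.00779 — 3 statements merged into one kernel-verified Lean document; each statement's English description precedes it below -/
import Mathlib

section
/- Let k be any field and R = k[t,u,x,y]/(xy − tu − 1) the coordinate ring of SL₂. For λ ∈ k*, let ρ_λ* : R → k[s,t] be the k-algebra homomorphism induced by t ↦ t, u ↦ λs, x ↦ 1, y ↦ 1 + λst (the comorphism of ρ_λ : 𝔸² ↪ SL₂, (s,t) ↦ ((1,t),(λs,1+λst))). Then: (a) for every surjective k-algebra homomorphism σ : R → k[s,t] with ker σ = ker ρ₁* (i.e., every closed embedding 𝔸² ↪ SL₂ with image equal to ρ₁(𝔸²)), there exist λ ∈ k* and a k-algebra automorphism Φ of R with σ = ρ_λ* ∘ Φ; (b) for λ, λ' ∈ k*, there exists a k-algebra automorphism Φ of R with ρ_{λ'}* = ρ_λ* ∘ Φ if and only if λ' = λ or λ' = −λ. -/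
open MvPolynomial

noncomputable section

variable (k : Type*) [Field k]

/-- The polynomial `x*y - t*u - 1` defining `SL₂` inside `𝔸⁴ = Spec k[t,u,x,y]`
(variables: `0 = t`, `1 = u`, `2 = x`, `3 = y`). -/
def sl2Rel : MvPolynomial (Fin 4) k := X 2 * X 3 - X 0 * X 1 - 1

/-- The coordinate ring `R = k[t,u,x,y]/(xy - tu - 1)` of `SL₂`. -/
abbrev SL2Ring : Type _ := MvPolynomial (Fin 4) k ⧸ Ideal.span {sl2Rel k}

/-- The comorphism of the embedding `ρ_λ : 𝔸² ↪ SL₂`, `(s,t) ↦ ((1,t),(λs,1+λst))`, on the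
level of the ambient polynomial ring: `t ↦ t`, `u ↦ λs`, `x ↦ 1`, `y ↦ 1 + λst`
(in `k[s,t]`, variables `0 = s`, `1 = t`). -/
def rhoLamAux (lam : k) : MvPolynomial (Fin 4) k →ₐ[k] MvPolynomial (Fin 2) k :=
  aeval ![X 1, C lam * X 0, 1, 1 + C lam * X 0 * X 1]

lemma rhoLamAux_rel (lam : k) : rhoLamAux k lam (sl2Rel k) = 0 := by
  simp [rhoLamAux, sl2Rel]
  ring

/-- The comorphism `ρ_λ* : R → k[s,t]` of the embedding `ρ_λ : 𝔸² ↪ SL₂`,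
`(s,t) ↦ ((1,t),(λs,1+λst))`; induced by `t ↦ t`, `u ↦ λs`, `x ↦ 1`, `y ↦ 1 + λst`. -/
def rhoLamStar (lam : k) : SL2Ring k →ₐ[k] MvPolynomial (Fin 2) k :=
  Ideal.Quotient.liftₐ _ (rhoLamAux k lam) (by
    intro a ha
    rw [Ideal.mem_span_singleton] at ha
    obtain ⟨c, rfl⟩ := ha
    rw [map_mul, rhoLamAux_rel]
    simp)

/-!
An automorphism `β` of `𝔸²` extends along `ρ₁` to an automorphism of `SL₂` if and only if its
Jacobian determinant is `±1`; as `ρ_λ` is `ρ₁` composed with an automorphism of `𝔸²` of determinant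
`λ`, this gives both claims.

For "if", affine maps of determinant `1` and `(s, t) ↦ (t, s)` extend, which leaves `γ` fixing the
origin with derivative the identity. Conjugating such a `γ` by the homothety of ratio `x`
gives `(t, u) ↦ (t + x b, u + x a)` with `a`, `b` regular, and this is an automorphism of `SL₂`
over the `x`-line restricting to `γ` on the fibre `x = 1`.

For "only if", an extension `Φ` of `β` fixes `x`. It also preserves `k[x, t, u]`: by Makar-Limanov's
method, a nontrivial additive action on `k[SL₂]` fixing `x`, suitably rescaled, degenerates at
`x = 0` to a nontrivial additive action on `k[t, u]`. If it fixed an element outside `k[x, t, u]`,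
the degenerate action would fix a nonzero multiple of `t u + 1`, hence `t` and `u`. So `Φ` is a
family over the `x`-line of automorphisms of `𝔸²`, of constant Jacobian determinant; the one at
`x = 0` preserves the curve `t u + 1 = 0`, and such automorphisms have determinant `±1`.
-/

variable {k}

/-! ### Jacobian determinants of polynomial automorphisms -/

open scoped Polynomial

section Jacobian

variable {σ τ υ B : Type*}

/-- The Jacobian matrix `(∂φ(Xᵢ)/∂Xⱼ)` of the polynomial map with comorphism `φ`. -/
def jacobianMatrix [CommSemiring B] (φ : MvPolynomial σ B →ₐ[B] MvPolynomial τ B) :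
    Matrix σ τ (MvPolynomial τ B) :=
  Matrix.of fun i j => pderiv j (φ (X i))

lemma jacobianMatrix_apply [CommSemiring B] (φ : MvPolynomial σ B →ₐ[B] MvPolynomial τ B)
    (i : σ) (j : τ) : jacobianMatrix φ i j = pderiv j (φ (X i)) := rfl

lemma pderiv_algHom_apply [CommSemiring B] [Fintype σ]
    (φ : MvPolynomial σ B →ₐ[B] MvPolynomial τ B) (p : MvPolynomial σ B) (j : τ) :
    pderiv j (φ p) = ∑ i, φ (pderiv i p) * pderiv j (φ (X i)) := by
  classical
  induction p using MvPolynomial.induction_on with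
  | C b => simp [← algebraMap_eq]
  | add p q hp hq => simp only [map_add, hp, hq, add_mul, Finset.sum_add_distrib]
  | mul_X p i hp =>
    simp only [map_mul, Derivation.leibniz, smul_eq_mul, hp, map_add, add_mul,
      Finset.sum_add_distrib, Finset.mul_sum, mul_assoc, pderiv_X]
    simp [Pi.single_apply]

lemma jacobianMatrix_comp [CommSemiring B] [Fintype σ]
    (φ : MvPolynomial σ B →ₐ[B] MvPolynomial τ B) (ψ : MvPolynomial υ B →ₐ[B] MvPolynomial σ B) :
    jacobianMatrix (φ.comp ψ) = (jacobianMatrix ψ).map φ * jacobianMatrix φ := by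
  ext1 i j
  exact pderiv_algHom_apply φ (ψ (X i)) j

lemma jacobianMatrix_id [CommSemiring B] [DecidableEq σ] :
    jacobianMatrix (AlgHom.id B (MvPolynomial σ B)) = 1 := by
  ext1 i j
  simp [jacobianMatrix_apply, pderiv_X, Pi.single_apply, Matrix.one_apply]

variable [CommRing B] [Fintype σ] [DecidableEq σ]

/-- The Jacobian determinant of the polynomial endomorphism with comorphism `φ`. -/
def jacobianDet (φ : MvPolynomial σ B →ₐ[B] MvPolynomial σ B) : MvPolynomial σ B :=
  (jacobianMatrix φ).det

lemma jacobianDet_comp (φ ψ : MvPolynomial σ B →ₐ[B] MvPolynomial σ B) :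
    jacobianDet (φ.comp ψ) = φ (jacobianDet ψ) * jacobianDet φ := by
  rw [jacobianDet, jacobianMatrix_comp, Matrix.det_mul, jacobianDet, jacobianDet, AlgHom.map_det]
  rfl

lemma isUnit_jacobianDet (e : MvPolynomial σ B ≃ₐ[B] MvPolynomial σ B) :
    IsUnit (jacobianDet (e : MvPolynomial σ B →ₐ[B] MvPolynomial σ B)) := by
  have h := jacobianDet_comp (e : MvPolynomial σ B →ₐ[B] MvPolynomial σ B) e.symm
  rw [AlgEquiv.comp_symm, jacobianDet, jacobianMatrix_id, Matrix.det_one] at h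
  exact IsUnit.of_mul_eq_one_right _ h.symm

lemma jacobianDet_eq_map {B' : Type*} [CommRing B'] (f : B →+* B')
    {φ : MvPolynomial σ B →ₐ[B] MvPolynomial σ B}
    {φ' : MvPolynomial σ B' →ₐ[B'] MvPolynomial σ B'} (h : ∀ i, φ' (X i) = map f (φ (X i))) :
    jacobianDet φ' = map f (jacobianDet φ) := by
  have hJ : jacobianMatrix φ' = (map f).mapMatrix (jacobianMatrix φ) := by
    ext1 i j
    simp [jacobianMatrix_apply, h, pderiv_map]
  rw [jacobianDet, hJ, ← RingHom.map_det, jacobianDet]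

/-- The Jacobian determinant of automorphisms of `B[X_σ]`, which is a constant, as a character. -/
def jacobianChar [IsReduced B] : (MvPolynomial σ B ≃ₐ[B] MvPolynomial σ B) →* Bˣ :=
  MonoidHom.mk' (fun e => (isUnit_jacobianDet e).unit.map constantCoeff.toMonoidHom) fun e f => by
    obtain ⟨b, -, hb⟩ := isUnit_iff_eq_C_of_isReduced.1 (isUnit_jacobianDet f)
    have h := jacobianDet_comp (e : MvPolynomial σ B →ₐ[B] MvPolynomial σ B) f
    rw [hb, ← algebraMap_eq, AlgHom.commutes, algebraMap_eq] at h
    ext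
    change constantCoeff _ = constantCoeff _ *
      constantCoeff (jacobianDet (f : MvPolynomial σ B →ₐ[B] MvPolynomial σ B))
    rw [hb, ← map_mul, mul_comm]
    exact congrArg constantCoeff h

lemma C_jacobianChar [IsReduced B] (e : MvPolynomial σ B ≃ₐ[B] MvPolynomial σ B) :
    C (jacobianChar e : B) = jacobianDet (e : MvPolynomial σ B →ₐ[B] MvPolynomial σ B) := by
  obtain ⟨b, -, hb⟩ := isUnit_iff_eq_C_of_isReduced.1 (isUnit_jacobianDet e)
  simp [jacobianChar, hb]

lemma jacobianChar_eq_map {B' : Type*} [CommRing B'] [IsReduced B] [IsReduced B'] (f : B →+* B')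
    {e : MvPolynomial σ B ≃ₐ[B] MvPolynomial σ B} {e' : MvPolynomial σ B' ≃ₐ[B'] MvPolynomial σ B'}
    (h : ∀ i, e' (X i) = map f (e (X i))) : (jacobianChar e' : B') = f (jacobianChar e) :=
  C_injective σ B' <| by
    rw [C_jacobianChar, jacobianDet_eq_map (φ := (e : MvPolynomial σ B →ₐ[B] MvPolynomial σ B)) f h,
      ← C_jacobianChar, map_C]

lemma det_constantCoeff_jacobianMatrix [IsReduced B] (e : MvPolynomial σ B ≃ₐ[B] MvPolynomial σ B) :
    ((jacobianMatrix (e : MvPolynomial σ B →ₐ[B] MvPolynomial σ B)).map constantCoeff).det =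
      jacobianChar e := by
  have h := congrArg constantCoeff (C_jacobianChar e)
  rw [constantCoeff_C, jacobianDet, RingHom.map_det] at h
  exact h.symm

end Jacobian

section LinearPart

variable {σ B : Type*} [CommSemiring B]

lemma constantCoeff_algHom_apply {φ : MvPolynomial σ B →ₐ[B] MvPolynomial σ B}
    (h : ∀ i, constantCoeff (φ (X i)) = 0) (p : MvPolynomial σ B) :
    constantCoeff (φ p) = constantCoeff p := by
  induction p using MvPolynomial.induction_on with
  | C b => simp [← algebraMap_eq]
  | add p q hp hq => rw [map_add, map_add, hp, hq, map_add]
  | mul_X p i => simp [h]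

lemma exists_aeval_mul_eq_linear_add_sq {W : Type*} [Fintype σ] [CommSemiring W] [Algebra B W]
    (x : W) (v : σ → W) (p : MvPolynomial σ B) :
    ∃ q, aeval (fun i => x * v i) p = algebraMap B W (constantCoeff p) +
      x * ∑ i, algebraMap B W (constantCoeff (pderiv i p)) * v i + x ^ 2 * q := by
  classical
  induction p using MvPolynomial.induction_on with
  | C b => exact ⟨0, by simp⟩
  | add p q hp hq =>
    obtain ⟨a, ha⟩ := hp
    obtain ⟨b, hb⟩ := hq
    refine ⟨a + b, ?_⟩
    simp only [map_add, ha, hb, add_mul, Finset.sum_add_distrib]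
    ring
  | mul_X p j hp =>
    obtain ⟨a, ha⟩ := hp
    refine ⟨(∑ i, algebraMap B W (constantCoeff (pderiv i p)) * v i) * v j + x * a * v j, ?_⟩
    have hlin : ∑ i, algebraMap B W (constantCoeff (pderiv i (p * X j))) * v i =
        algebraMap B W (constantCoeff p) * v j := by
      simp [pderiv_X, Pi.single_apply, apply_ite, ite_mul]
    rw [hlin, map_mul, ha, aeval_X, map_mul, constantCoeff_X, mul_zero, map_zero]
    ring

/-- The automorphisms fixing the origin, with derivative the identity there. -/
structure IsTangentToId [DecidableEq σ] (e : MvPolynomial σ B ≃ₐ[B] MvPolynomial σ B) : Prop where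
  constantCoeff_X : ∀ i, constantCoeff (e (X i)) = 0
  linearPart : (jacobianMatrix (e : MvPolynomial σ B →ₐ[B] MvPolynomial σ B)).map
    constantCoeff = 1

lemma IsTangentToId.symm [Finite σ] [DecidableEq σ] {e : MvPolynomial σ B ≃ₐ[B] MvPolynomial σ B}
    (he : IsTangentToId e) : IsTangentToId e.symm := by
  cases nonempty_fintype σ
  have hcc : ∀ p, constantCoeff (e p) = constantCoeff p :=
    constantCoeff_algHom_apply (φ := (e : MvPolynomial σ B →ₐ[B] MvPolynomial σ B))
      he.constantCoeff_X
  refine ⟨fun i => (hcc _).symm.trans (by simp), ?_⟩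
  have hJ := congrArg (fun M => M.map constantCoeff)
    (jacobianMatrix_comp (e : MvPolynomial σ B →ₐ[B] MvPolynomial σ B)
      (e.symm : MvPolynomial σ B →ₐ[B] MvPolynomial σ B))
  simp only [AlgEquiv.comp_symm, jacobianMatrix_id, Matrix.map_mul, he.linearPart, mul_one,
    Matrix.map_map, Matrix.map_one _ (map_zero constantCoeff) (map_one constantCoeff)] at hJ
  rw [hJ]
  ext1 i j
  exact (hcc _).symm

end LinearPart

/-! ### The coordinate ring of `SL₂` -/

namespace SL2Ring

variable {W : Type*} [CommRing W] [Algebra k W]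

/-- The coordinate function `t` on `SL₂`, the upper right entry. -/
def t : SL2Ring k := Ideal.Quotient.mk _ (X 0)

/-- The coordinate function `u` on `SL₂`, the lower left entry. -/
def u : SL2Ring k := Ideal.Quotient.mk _ (X 1)

/-- The coordinate function `x` on `SL₂`, the upper left entry. -/
def x : SL2Ring k := Ideal.Quotient.mk _ (X 2)

/-- The coordinate function `y` on `SL₂`, the lower right entry. -/
def y : SL2Ring k := Ideal.Quotient.mk _ (X 3)

lemma x_mul_y : (x * y : SL2Ring k) = t * u + 1 := by
  have h : Ideal.Quotient.mk (Ideal.span {sl2Rel k}) (sl2Rel k) = 0 :=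
    Ideal.Quotient.eq_zero_iff_mem.2 (Ideal.mem_span_singleton_self _)
  rw [sl2Rel, map_sub, map_sub, map_mul, map_mul, map_one] at h
  exact sub_eq_zero.1 ((sub_sub _ _ _).symm.trans h)

/-- The homomorphism out of `k[SL₂]` with prescribed images of `t`, `u`, `x`, `y`. -/
def lift (a b c d : W) (h : c * d = a * b + 1) : SL2Ring k →ₐ[k] W :=
  Ideal.Quotient.liftₐ _ (aeval ![a, b, c, d]) fun z hz => by
    obtain ⟨q, rfl⟩ := Ideal.mem_span_singleton.1 hz
    simp [sl2Rel, h]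

section

variable (a b c d : W) (h : c * d = a * b + 1)

@[simp] lemma lift_t : lift (k := k) a b c d h t = a := aeval_X ![a, b, c, d] 0

@[simp] lemma lift_u : lift (k := k) a b c d h u = b := aeval_X ![a, b, c, d] 1

@[simp] lemma lift_x : lift (k := k) a b c d h x = c := aeval_X ![a, b, c, d] 2

@[simp] lemma lift_y : lift (k := k) a b c d h y = d := aeval_X ![a, b, c, d] 3

end

lemma algHom_ext {W : Type*} [Semiring W] [Algebra k W] {f g : SL2Ring k →ₐ[k] W}
    (ht : f t = g t) (hu : f u = g u) (hx : f x = g x) (hy : f y = g y) : f = g :=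
  Ideal.Quotient.algHom_ext _ <| MvPolynomial.algHom_ext fun i => by
    fin_cases i <;> assumption

lemma algHom_ext_of_isLeftRegular {f g : SL2Ring k →ₐ[k] W} (hf : IsLeftRegular (f x))
    (ht : f t = g t) (hu : f u = g u) (hx : f x = g x) : f = g :=
  algHom_ext ht hu hx <| hf <| by
    change f x * f y = f x * g y
    rw [← map_mul, x_mul_y, hx, ← map_mul g, x_mul_y]
    simp [ht, hu]

@[simp] lemma rhoLamStar_t (l : k) : rhoLamStar k l t = X 1 := aeval_X _ 0

@[simp] lemma rhoLamStar_u (l : k) : rhoLamStar k l u = C l * X 0 := aeval_X _ 1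

@[simp] lemma rhoLamStar_x (l : k) : rhoLamStar k l x = 1 := aeval_X _ 2

lemma isPrime_span_sl2Rel : (Ideal.span {sl2Rel k}).IsPrime := by
  have hvars : 3 ∉ (-(X 0 * X 1 + 1) : MvPolynomial (Fin 4) k).vars := by
    grind [vars_neg, vars_add_subset, vars_mul, vars_X, vars_one]
  have hdvd : ¬X 2 ∣ (-(X 0 * X 1 + 1) : MvPolynomial (Fin 4) k) := fun h => by
    simpa using map_dvd constantCoeff h
  have h : Irreducible (X 2 * X 3 + -(X 0 * X 1 + 1) : MvPolynomial (Fin 4) k) :=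
    irreducible_mul_X_add _ _ 3 (X_ne_zero 2) (by simp) hvars
      (X_prime.irreducible.isRelPrime_iff_not_dvd.2 hdvd)
  have hrel : sl2Rel k = X 2 * X 3 + -(X 0 * X 1 + 1) := by rw [sl2Rel]; ring
  rw [Ideal.span_singleton_prime, hrel]
  · exact h.prime
  · rw [hrel]
    exact h.ne_zero

instance : IsDomain (SL2Ring k) :=
  haveI := isPrime_span_sl2Rel (k := k)
  Ideal.Quotient.isDomain _

lemma x_ne_zero : (x : SL2Ring k) ≠ 0 := fun h =>
  one_ne_zero (α := MvPolynomial (Fin 2) k) <| by simpa using congrArg (rhoLamStar k 1) h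

end SL2Ring

/-! ### Automorphisms of the plane -/

/-- The group of automorphisms of the coordinate ring `k[𝔸²] = k[X 0, X 1]` of the affine plane. -/
abbrev PlaneAut (k : Type*) [Field k] : Type _ :=
  MvPolynomial (Fin 2) k ≃ₐ[k] MvPolynomial (Fin 2) k

namespace PlaneAut

lemma ext {β γ : PlaneAut k} (h₀ : β (X 0) = γ (X 0)) (h₁ : β (X 1) = γ (X 1)) : β = γ :=
  AlgEquiv.coe_toAlgHom_injective <| MvPolynomial.algHom_ext fun i => by
    fin_cases i <;> assumption

@[simp] lemma apply_C (β : PlaneAut k) (a : k) : β (C a) = C a := β.commutes a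

lemma coe_jacobianChar_eq (β : PlaneAut k) : (C (jacobianChar β : k) : MvPolynomial (Fin 2) k) =
    pderiv 0 (β (X 0)) * pderiv 1 (β (X 1)) - pderiv 1 (β (X 0)) * pderiv 0 (β (X 1)) := by
  rw [C_jacobianChar, jacobianDet, Matrix.det_fin_two]
  rfl

/-- The diagonal automorphism `(a X₀, b X₁)`. -/
def diagonal (a b : kˣ) : PlaneAut k :=
  AlgEquiv.ofAlgHom (aeval ![C (a : k) * X 0, C (b : k) * X 1])
    (aeval ![C (↑a⁻¹ : k) * X 0, C (↑b⁻¹ : k) * X 1])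
    (by ext i; fin_cases i <;> simp [algebraMap_eq, ← mul_assoc, ← C_mul])
    (by ext i; fin_cases i <;> simp [algebraMap_eq, ← mul_assoc, ← C_mul])

@[simp] lemma diagonal_X_zero (a b : kˣ) : diagonal a b (X 0) = C (a : k) * X 0 := by
  simp [diagonal]

@[simp] lemma diagonal_X_one (a b : kˣ) : diagonal a b (X 1) = C (b : k) * X 1 := by
  simp [diagonal]

lemma jacobianChar_diagonal (a b : kˣ) : jacobianChar (diagonal a b) = a * b := by
  refine Units.ext (C_injective (Fin 2) k ?_)
  simp [coe_jacobianChar_eq, pderiv_X]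

/-- The involution exchanging `X₀` and `X₁`. -/
def swap : PlaneAut k := renameEquiv k (Equiv.swap 0 1)

@[simp] lemma swap_X_zero : swap (k := k) (X 0) = X 1 := by simp [swap]

@[simp] lemma swap_X_one : swap (k := k) (X 1) = X 0 := by simp [swap]

lemma jacobianChar_swap : jacobianChar (swap (k := k)) = -1 := by
  refine Units.ext (C_injective (Fin 2) k ?_)
  simp [coe_jacobianChar_eq]

/-- The elementary automorphism `(X₀, X₁ + p(X₀))`. -/
def shear (p : k[X]) : PlaneAut k :=
  AlgEquiv.ofAlgHom (aeval ![X 0, X 1 + Polynomial.aeval (X 0) p])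
    (aeval ![X 0, X 1 - Polynomial.aeval (X 0) p])
    (by ext i; fin_cases i <;> simp [← Polynomial.aeval_algHom_apply])
    (by ext i; fin_cases i <;> simp [← Polynomial.aeval_algHom_apply])

@[simp] lemma shear_X_zero (p : k[X]) : shear p (X 0) = X 0 := by simp [shear]

@[simp] lemma shear_X_one (p : k[X]) :
    shear p (X 1) = X 1 + Polynomial.aeval (X 0) p := by simp [shear]

lemma jacobianChar_shear (p : k[X]) : jacobianChar (shear p) = 1 := by
  refine Units.ext (C_injective (Fin 2) k ?_)
  simp [coe_jacobianChar_eq, pderiv_X]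

/-- The translation `(X₀ + c 0, X₁ + c 1)`. -/
def translate (c : Fin 2 → k) : PlaneAut k :=
  shear (Polynomial.C (c 1)) * (swap * shear (Polynomial.C (c 0)) * swap)

lemma translate_X (c : Fin 2 → k) (i : Fin 2) : translate c (X i) = X i + C (c i) := by
  fin_cases i <;> simp [translate, algebraMap_eq]

lemma jacobianChar_translate (c : Fin 2 → k) : jacobianChar (translate c) = 1 := by
  simp [translate, jacobianChar_shear, jacobianChar_swap]

end PlaneAut

/-! ### Extending automorphisms of Jacobian determinant `±1` -/

namespace SL2Ring

/-- The endomorphism `(t, u) ↦ (t + x b, u + x a)` of `k[SL₂]` over `k[x]`. -/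
def shift (a b : SL2Ring k) : SL2Ring k →ₐ[k] SL2Ring k :=
  lift (t + x * b) (u + x * a) x (y + t * a + u * b + x * a * b)
    (by linear_combination x_mul_y (k := k))

@[simp] lemma shift_t (a b : SL2Ring k) : shift a b t = t + x * b := lift_t ..

@[simp] lemma shift_u (a b : SL2Ring k) : shift a b u = u + x * a := lift_u ..

@[simp] lemma shift_x (a b : SL2Ring k) : shift a b x = x := lift_x ..

lemma isLeftRegular_x : IsLeftRegular (x : SL2Ring k) :=
  IsLeftCancelMulZero.mul_left_cancel_of_ne_zero x_ne_zero

variable (k) in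
/-- The automorphisms of `𝔸²` that extend along `ρ₁` to automorphisms of `SL₂`. -/
def liftable : Subgroup (PlaneAut k) where
  carrier := {β | ∃ Φ : SL2Ring k ≃ₐ[k] SL2Ring k,
    ∀ r, rhoLamStar k 1 (Φ r) = β (rhoLamStar k 1 r)}
  mul_mem' := by
    rintro β γ ⟨Φ, hΦ⟩ ⟨Ψ, hΨ⟩
    exact ⟨Φ * Ψ, fun r => by simp only [AlgEquiv.mul_apply, hΦ, hΨ]⟩
  one_mem' := ⟨1, fun _ => rfl⟩
  inv_mem' := by
    rintro β ⟨Φ, hΦ⟩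
    refine ⟨Φ⁻¹, fun r => (AlgEquiv.eq_symm_apply β).2 ?_⟩
    rw [← hΦ]
    exact congrArg _ (Φ.apply_symm_apply r)

lemma mem_liftable_iff_exists {β : PlaneAut k} : β ∈ liftable k ↔
    ∃ Φ : SL2Ring k ≃ₐ[k] SL2Ring k, ∀ r, rhoLamStar k 1 (Φ r) = β (rhoLamStar k 1 r) :=
  Iff.rfl

lemma mem_liftable_of_apply_x {β : PlaneAut k} (Φ : SL2Ring k ≃ₐ[k] SL2Ring k) (hx : Φ x = x)
    (hu : rhoLamStar k 1 (Φ u) = β (X 0)) (ht : rhoLamStar k 1 (Φ t) = β (X 1)) :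
    β ∈ liftable k := by
  have h : (rhoLamStar k 1).comp (Φ : SL2Ring k →ₐ[k] SL2Ring k) =
      (β : MvPolynomial (Fin 2) k →ₐ[k] MvPolynomial (Fin 2) k).comp (rhoLamStar k 1) := by
    refine algHom_ext_of_isLeftRegular ?_ ?_ ?_ ?_
    · simpa [hx] using (isRegular_one (R := MvPolynomial (Fin 2) k)).left
    · simpa using ht
    · simpa using hu
    · simp [hx]
  exact ⟨Φ, fun r => DFunLike.congr_fun h r⟩

lemma mem_liftable_of_shift {β : PlaneAut k} {a b a' b' : SL2Ring k}
    (h : (shift a b).comp (shift a' b') = AlgHom.id k _)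
    (h' : (shift a' b').comp (shift a b) = AlgHom.id k _)
    (h₀ : X 0 + rhoLamStar k 1 a = β (X 0)) (h₁ : X 1 + rhoLamStar k 1 b = β (X 1)) :
    β ∈ liftable k :=
  mem_liftable_of_apply_x (AlgEquiv.ofAlgHom (shift a b) (shift a' b') h h') (by simp)
    (by simpa using h₀) (by simpa using h₁)

/-- The involution exchanging `t` and `u`. -/
def swap : SL2Ring k ≃ₐ[k] SL2Ring k :=
  AlgEquiv.ofAlgHom (lift u t x y (by rw [x_mul_y, mul_comm]))
    (lift u t x y (by rw [x_mul_y, mul_comm]))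
    (by apply algHom_ext <;> simp) (by apply algHom_ext <;> simp)

@[simp] lemma swap_t : swap (k := k) t = u := by simp [swap]

@[simp] lemma swap_u : swap (k := k) u = t := by simp [swap]

@[simp] lemma swap_x : swap (k := k) x = x := by simp [swap]

lemma swap_mem_liftable : PlaneAut.swap ∈ liftable k :=
  mem_liftable_of_apply_x swap (by simp) (by simp) (by simp)

lemma shear_mem_liftable (p : k[X]) : PlaneAut.shear p ∈ liftable k := by
  have h : ∀ p : k[X], (shift 0 (Polynomial.aeval u p)).comp (shift 0 (-Polynomial.aeval u p)) =
      AlgHom.id k _ := fun p => by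
    refine algHom_ext_of_isLeftRegular (by simpa using isLeftRegular_x) ?_ (by simp) (by simp)
    simp only [AlgHom.comp_apply, shift_t, shift_u, shift_x, map_add, map_mul, map_neg, mul_zero,
      ← Polynomial.aeval_algHom_apply, add_zero, AlgHom.id_apply]
    ring
  refine mem_liftable_of_shift (h p) (by simpa using h (-p)) (by simp) ?_
  simp [← Polynomial.aeval_algHom_apply]

lemma translate_mem_liftable (c : Fin 2 → k) : PlaneAut.translate c ∈ liftable k :=
  mul_mem (shear_mem_liftable _)
    (mul_mem (mul_mem swap_mem_liftable (shear_mem_liftable _)) swap_mem_liftable)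

/-- The automorphism `(t, u) ↦ (a⁻¹ t, a u)`, induced by conjugation with a diagonal matrix. -/
def torus (a : kˣ) : SL2Ring k ≃ₐ[k] SL2Ring k :=
  AlgEquiv.ofAlgHom
    (lift ((↑a⁻¹ : k) • t) ((a : k) • u) x y (by simp [smul_mul_smul_comm, x_mul_y]))
    (lift ((a : k) • t) ((↑a⁻¹ : k) • u) x y (by simp [smul_mul_smul_comm, x_mul_y]))
    (by apply algHom_ext <;> simp [smul_smul]) (by apply algHom_ext <;> simp [smul_smul])

lemma diagonal_mem_liftable (a : kˣ) : PlaneAut.diagonal a a⁻¹ ∈ liftable k := by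
  apply mem_liftable_of_apply_x (torus a) <;> simp [torus, smul_eq_C_mul]

lemma exists_mem_liftable_linear (M : Matrix (Fin 2) (Fin 2) k) (hM : M.det = 1) :
    ∃ β ∈ liftable k, ∀ i, β (X i) = ∑ j, M i j • X j := by
  refine Matrix.diagonal_transvection_induction
    (fun M => ∃ β ∈ liftable k, ∀ i, β (X i) = ∑ j, M i j • X j) M ?_ ?_ ?_
  · intro D hD
    have hD' : D 0 * D 1 = 1 := by simpa [hM, Matrix.det_fin_two] using hD
    refine ⟨_, diagonal_mem_liftable (Units.mkOfMulEqOne _ _ hD'), fun i => ?_⟩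
    fin_cases i <;> simp [smul_eq_C_mul, Units.mkOfMulEqOne]
  · rintro ⟨i, j, hij, c⟩
    have hs := shear_mem_liftable (Polynomial.C c * Polynomial.X)
    fin_cases i <;> fin_cases j
    · exact absurd rfl hij
    · refine ⟨_, mul_mem (mul_mem swap_mem_liftable hs) swap_mem_liftable, fun i => ?_⟩
      fin_cases i <;> simp [Matrix.TransvectionStruct.toMatrix, Matrix.transvection,
        Matrix.one_apply, Matrix.single_apply, smul_eq_C_mul, algebraMap_eq]
    · refine ⟨_, hs, fun i => ?_⟩
      fin_cases i <;> simp [Matrix.TransvectionStruct.toMatrix, Matrix.transvection,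
        Matrix.one_apply, Matrix.single_apply, smul_eq_C_mul, algebraMap_eq, add_comm]
    · exact absurd rfl hij
  · rintro M N ⟨β, hβ, hM⟩ ⟨γ, hγ, hN⟩
    refine ⟨γ * β, mul_mem hγ hβ, fun i => ?_⟩
    simp only [AlgEquiv.mul_apply, hM, hN, map_sum, map_smul, Matrix.mul_apply, Finset.smul_sum,
      Finset.sum_smul, smul_smul]
    exact Finset.sum_comm

/-- The homomorphism `X₀ ↦ x u`, `X₁ ↦ x t`. -/
def dilate : MvPolynomial (Fin 2) k →ₐ[k] SL2Ring k := aeval fun i => x * ![u, t] i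

lemma exists_shift_comp_dilate_eq {γ : PlaneAut k} (hγ : IsTangentToId γ) :
    ∃ a b : SL2Ring k, (shift a b).comp dilate =
        dilate.comp (γ : MvPolynomial (Fin 2) k →ₐ[k] MvPolynomial (Fin 2) k) ∧
      X 0 + rhoLamStar k 1 a = γ (X 0) ∧ X 1 + rhoLamStar k 1 b = γ (X 1) := by
  have hρ : (rhoLamStar k 1).comp dilate = AlgHom.id k _ := by
    ext i; fin_cases i <;> simp [dilate]
  have hdilate : ∀ i, ∃ q, dilate (γ (X i)) = x * ![u, t] i + x ^ 2 * q := fun i => by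
    obtain ⟨q, hq⟩ := exists_aeval_mul_eq_linear_add_sq (x : SL2Ring k) ![u, t] (γ (X i))
    refine ⟨q, hq.trans ?_⟩
    have hJ : ∀ j, constantCoeff (pderiv j (γ (X i))) = (1 : Matrix (Fin 2) (Fin 2) k) i j :=
      congrFun (congrFun hγ.linearPart i)
    simp [hγ.constantCoeff_X, hJ, Matrix.one_apply, ite_mul]
  choose q hq using hdilate
  have hγq : ∀ i, X i + rhoLamStar k 1 (q i) = γ (X i) := fun i => by
    have h := congrArg (rhoLamStar k 1) (hq i)
    rw [← AlgHom.comp_apply, hρ] at h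
    fin_cases i <;> simpa using h.symm
  refine ⟨q 0, q 1, ?_, hγq 0, hγq 1⟩
  ext i
  fin_cases i <;> simp [hq] <;> simp [dilate, mul_add, sq, mul_assoc]

lemma mem_liftable_of_isTangentToId {γ : PlaneAut k} (hγ : IsTangentToId γ) : γ ∈ liftable k := by
  have hcomp : ∀ {γ : PlaneAut k} {a b a' b' : SL2Ring k},
      (shift a b).comp dilate =
        dilate.comp (γ : MvPolynomial (Fin 2) k →ₐ[k] MvPolynomial (Fin 2) k) →
      (shift a' b').comp dilate =
        dilate.comp (γ.symm : MvPolynomial (Fin 2) k →ₐ[k] MvPolynomial (Fin 2) k) →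
      (shift a b).comp (shift a' b') = AlgHom.id k _ := by
    intro γ a b a' b' h h'
    have hX : ∀ p, shift a b (shift a' b' (dilate p)) = dilate p := fun p => by
      rw [← AlgHom.comp_apply (shift a' b'), h', AlgHom.comp_apply, ← AlgHom.comp_apply, h]
      simp
    refine algHom_ext_of_isLeftRegular (by simpa using isLeftRegular_x) ?_ ?_ (by simp)
    · exact isLeftRegular_x (by simpa [dilate] using hX (X 1))
    · exact isLeftRegular_x (by simpa [dilate] using hX (X 0))
  obtain ⟨a, b, h, h₀, h₁⟩ := exists_shift_comp_dilate_eq hγ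
  obtain ⟨a', b', h', -⟩ := exists_shift_comp_dilate_eq hγ.symm
  exact mem_liftable_of_shift (hcomp h h') (hcomp h' h) h₀ h₁

lemma mem_liftable_of_constantCoeff_eq_zero {β : PlaneAut k}
    (h₀ : ∀ i, constantCoeff (β (X i)) = 0) (hβ : jacobianChar β = 1) : β ∈ liftable k := by
  let M := (jacobianMatrix (β : MvPolynomial (Fin 2) k →ₐ[k] MvPolynomial (Fin 2) k)).map
    constantCoeff
  have hM : M.det = 1 := by rw [det_constantCoeff_jacobianMatrix, hβ, Units.val_one]
  obtain ⟨ℓ, hℓ, hℓX⟩ := exists_mem_liftable_linear M⁻¹ (by simp [Matrix.det_nonsing_inv, hM])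
  have htangent : IsTangentToId (β * ℓ) := by
    refine ⟨fun i => by simp [hℓX, h₀], ?_⟩
    rw [← Matrix.nonsing_inv_mul M (by simp [hM])]
    ext i j
    simp [jacobianMatrix_apply, hℓX, Matrix.mul_apply, M]
  exact (Subgroup.mul_mem_cancel_right _ hℓ).1 (mem_liftable_of_isTangentToId htangent)

lemma mem_liftable_of_jacobianChar_eq_one {β : PlaneAut k} (hβ : jacobianChar β = 1) :
    β ∈ liftable k := by
  have hτ := translate_mem_liftable fun i => -constantCoeff (β (X i))
  rw [← Subgroup.mul_mem_cancel_right _ hτ]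
  refine mem_liftable_of_constantCoeff_eq_zero (fun i => ?_) ?_
  · simp [PlaneAut.translate_X]
  · rw [map_mul, hβ, PlaneAut.jacobianChar_translate, one_mul]

lemma mem_liftable_of_jacobianChar_eq_neg_one {β : PlaneAut k} (hβ : jacobianChar β = -1) :
    β ∈ liftable k := by
  rw [← Subgroup.mul_mem_cancel_right _ swap_mem_liftable]
  apply mem_liftable_of_jacobianChar_eq_one
  simp [hβ, PlaneAut.jacobianChar_swap]

end SL2Ring

/-! ### Degeneration of deformations -/

section Rescale

variable {W : Type*} [CommSemiring W]

/-- The substitution `τ ↦ r τ` in `W[τ]`. -/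
def rescale (r : W) : W[X] →ₐ[W] W[X] := Polynomial.aeval (Polynomial.C r * Polynomial.X)

lemma coeff_rescale (r : W) (P : W[X]) (n : ℕ) : (rescale r P).coeff n = P.coeff n * r ^ n :=
  Polynomial.comp_C_mul_X_coeff

@[simp] lemma rescale_C (r a : W) : rescale r (Polynomial.C a) = Polynomial.C a :=
  Polynomial.aeval_C _ a

lemma exists_rescale_eq {r : W} {P : W[X]} (h : ∀ n, r ^ n ∣ P.coeff n) :
    ∃ Q, rescale r Q = P := by
  choose c hc using h
  refine ⟨∑ n ∈ P.support, Polynomial.monomial n (c n), ?_⟩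
  ext n
  rw [coeff_rescale, Polynomial.finsetSum_coeff]
  simp only [Polynomial.coeff_monomial, Finset.sum_ite_eq']
  split_ifs with hn
  · rw [hc, mul_comm]
  · rw [zero_mul, Polynomial.notMem_support_iff.1 hn]

end Rescale

lemma rescale_injective {W : Type*} [CommRing W] [IsDomain W] {r : W} (hr : r ≠ 0) :
    Function.Injective (rescale r) := fun P Q h => by
  ext n
  have hn := congrArg (fun P => P.coeff n) h
  simp only [coeff_rescale] at hn
  exact mul_right_cancel₀ (pow_ne_zero n hr) hn

section Specialize

variable {σ B : Type*} [CommRing B]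

/-- The specialisation of the parameter `x` to `c` in `B[x][X_σ]`. -/
abbrev specialize (c : B) : MvPolynomial σ B[X] →+* MvPolynomial σ B :=
  map (Polynomial.evalRingHom c)

/-- The substitution `x ↦ x ^ q` of the parameter in `B[x][X_σ]`. -/
abbrev ramify (q : ℕ) : MvPolynomial σ B[X] →+* MvPolynomial σ B[X] :=
  map (Polynomial.expand B q : B[X] →+* B[X])

lemma specialize_zero_ramify {q : ℕ} (hq : 0 < q) (s : MvPolynomial σ B[X]) :
    specialize 0 (ramify q s) = specialize 0 s := by
  rw [map_map]
  congr 2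
  ext <;> simp [hq.ne']

lemma C_X_dvd_iff (s : MvPolynomial σ B[X]) : C Polynomial.X ∣ s ↔ specialize 0 s = 0 :=
  C_dvd_iff_map_hom_eq_zero _ _
    (fun p => by simp [Polynomial.X_dvd_iff, Polynomial.coeff_zero_eq_eval_zero]) s

lemma C_X_ne_zero [Nontrivial B] : (C Polynomial.X : MvPolynomial σ B[X]) ≠ 0 := by simp

lemma prime_C_X [IsDomain B] : Prime (C Polynomial.X : MvPolynomial σ B[X]) :=
  (prime_C_iff σ).2 Polynomial.prime_X

lemma exists_ramify_slope [IsDomain B] [UniqueFactorizationMonoid B] {ι : Type*} {s : Finset ι}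
    (hs : s.Nonempty) {a : ι → MvPolynomial σ B[X]} (ha : ∀ i ∈ s, a i ≠ 0) {w : ι → ℕ}
    (hw : ∀ i ∈ s, 0 < w i) :
    ∃ q m, 0 < q ∧ (∀ i ∈ s, C Polynomial.X ^ (m * w i) ∣ ramify q (a i)) ∧
      ∃ i ∈ s, ∃ b, ramify q (a i) = C Polynomial.X ^ (m * w i) * b ∧ specialize 0 b ≠ 0 := by
  have hfactor : ∀ i ∈ s, ∃ (v : ℕ) (b : MvPolynomial σ B[X]),
      a i = C Polynomial.X ^ v * b ∧ specialize 0 b ≠ 0 := fun i hi => by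
    obtain ⟨b, hb, hdvd⟩ := (FiniteMultiplicity.of_prime_left prime_C_X
      (ha i hi)).exists_eq_pow_mul_and_not_dvd
    exact ⟨_, b, hb, fun h => hdvd ((C_X_dvd_iff b).2 h)⟩
  choose! v b hab hb using hfactor
  obtain ⟨i₀, hi₀, hmin⟩ := s.exists_min_image (fun i => (v i / w i : ℚ)) hs
  have hramify : ∀ i ∈ s, ramify (w i₀) (a i) =
      C Polynomial.X ^ (w i₀ * v i) * ramify (w i₀) (b i) := fun i hi => by
    conv_lhs => rw [hab i hi]
    simp [pow_mul]
  refine ⟨w i₀, v i₀, hw i₀ hi₀, fun i hi => ?_, i₀, hi₀, ramify (w i₀) (b i₀), ?_, ?_⟩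
  · have hle : v i₀ * w i ≤ v i * w i₀ := by
      have h := hmin i hi
      rw [div_le_div_iff₀ (by exact_mod_cast hw i₀ hi₀) (by exact_mod_cast hw i hi)] at h
      exact_mod_cast h
    rw [hramify i hi]
    exact (pow_dvd_pow _ (hle.trans_eq (mul_comm _ _))).mul_right _
  · rw [hramify i₀ hi₀, mul_comm (w i₀)]
  · rw [specialize_zero_ramify (hw i₀ hi₀)]
    exact hb i₀ hi₀

lemma aeval_specialize (c : B) (G : σ → (MvPolynomial σ B[X])[X]) (s : MvPolynomial σ B[X]) :
    aeval (fun l => (G l).map (specialize c)) (specialize c s) =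
      (aeval G s).map (specialize c) := by
  have h : (aeval fun l => (G l).map (specialize c) : MvPolynomial σ B →ₐ[B] _).toRingHom.comp
      (specialize c) = (Polynomial.mapRingHom (specialize c)).comp (aeval G).toRingHom := by
    apply MvPolynomial.ringHom_ext
    · intro p
      simp [Polynomial.algebraMap_apply, algebraMap_eq]
    · simp
  exact RingHom.congr_fun h s

lemma rescale_aeval_ramify {Ψ : MvPolynomial σ B[X] →ₐ[B[X]] (MvPolynomial σ B[X])[X]} {q : ℕ}
    {r : MvPolynomial σ B[X]} {G : σ → (MvPolynomial σ B[X])[X]}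
    (hG : ∀ l, rescale r (G l) = (Ψ (X l)).map (ramify q)) (s : MvPolynomial σ B[X]) :
    rescale r (aeval G (ramify q s)) = (Ψ s).map (ramify q) := by
  have h : (rescale r : _ →+* _).comp ((aeval G).toRingHom.comp (ramify q)) =
      (Polynomial.mapRingHom (ramify q)).comp Ψ.toRingHom := by
    apply MvPolynomial.ringHom_ext
    · intro p
      simp [← algebraMap_eq, Polynomial.algebraMap_apply]
    · simpa using hG
  exact RingHom.congr_fun h s

lemma exists_rescale_eq_map_ramify [IsDomain B] [UniqueFactorizationMonoid B] [Finite σ]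
    {F : σ → (MvPolynomial σ B[X])[X]} (hF : ∃ l, ∃ i ≠ 0, (F l).coeff i ≠ 0) :
    ∃ (q m : ℕ) (G : σ → (MvPolynomial σ B[X])[X]), 0 < q ∧
      (∀ l, rescale (C Polynomial.X ^ m) (G l) = (F l).map (ramify q)) ∧
      ∃ l, ∃ i ≠ 0, specialize 0 ((G l).coeff i) ≠ 0 := by
  classical
  cases nonempty_fintype σ
  let s := Finset.univ.sigma fun l => (F l).support.erase 0
  have hs : ∀ p, p ∈ s ↔ p.2 ≠ 0 ∧ (F p.1).coeff p.2 ≠ 0 := fun p => by simp [s]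
  obtain ⟨l₀, i₀, hi₀, hne⟩ := hF
  obtain ⟨q, m, hq, hdvd, ⟨l, i⟩, hli, b, hb, hb₀⟩ := exists_ramify_slope (s := s)
    (a := fun p => (F p.1).coeff p.2) (w := fun p => p.2) ⟨⟨l₀, i₀⟩, (hs _).2 ⟨hi₀, hne⟩⟩
    (fun p hp => ((hs p).1 hp).2) (fun p hp => Nat.pos_of_ne_zero ((hs p).1 hp).1)
  have hG : ∀ l, ∃ G, rescale (C Polynomial.X ^ m) G = (F l).map (ramify q) := fun l => by
    refine exists_rescale_eq fun n => ?_
    rw [Polynomial.coeff_map, ← pow_mul]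
    by_cases hn : ⟨l, n⟩ ∈ s
    · exact hdvd _ hn
    · obtain h | h := not_and_or.1 (mt (hs ⟨l, n⟩).2 hn)
      · simp [show n = 0 from not_not.1 h]
      · simp [show (F l).coeff n = 0 from not_not.1 h]
  choose G hG using hG
  refine ⟨q, m, G, hq, hG, l, i, ((hs _).1 hli).1, ?_⟩
  have hcoeff := congrArg (fun P => P.coeff i) (hG l)
  simp only [coeff_rescale, Polynomial.coeff_map, ← pow_mul] at hcoeff
  rw [hb, mul_comm] at hcoeff
  rwa [mul_left_cancel₀ (pow_ne_zero _ C_X_ne_zero) hcoeff]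

end Specialize

/-- A one-parameter deformation of the identity: a map `Ψ : W → W[τ]` whose value at `τ = 0` is the
identity. Homomorphic deformations are families of maps from `Spec W` to itself parametrised by
`τ`. -/
def IsDeformation {W : Type*} [Semiring W] (Ψ : W → W[X]) : Prop := ∀ a, (Ψ a).coeff 0 = a

namespace IsDeformation

section Domain

variable {W : Type*} [CommRing W] [IsDomain W] {Ψ : W →+* W[X]} {a b f : W}

lemma apply_eq_C_of_dvd (hΨ : IsDeformation Ψ) (hf : f ≠ 0) (hfix : Ψ f = Polynomial.C f)
    (hdvd : a ∣ f) : Ψ a = Polynomial.C a := by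
  have hdeg : (Ψ a).natDegree = 0 := by
    refine Nat.eq_zero_of_le_zero ?_
    rw [← Polynomial.natDegree_C f, ← hfix]
    exact Polynomial.natDegree_le_of_dvd (map_dvd Ψ hdvd) (by simpa [hfix] using hf)
  rw [Polynomial.eq_C_of_natDegree_eq_zero hdeg, hΨ]

lemma apply_eq_C_of_mul_add_one_dvd (hΨ : IsDeformation Ψ) (hf : f ≠ 0)
    (hfix : Ψ f = Polynomial.C f) (hab : a * b ≠ 0) (hdvd : a * b + 1 ∣ f) :
    Ψ a = Polynomial.C a := by
  have h := hΨ.apply_eq_C_of_dvd hf hfix hdvd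
  rw [map_add, map_one, map_add, map_one] at h
  exact hΨ.apply_eq_C_of_dvd hab (add_right_cancel h) (dvd_mul_right a b)

end Domain

section MvPolynomial

variable {σ B : Type*} [CommRing B]

lemma of_X {Ψ : MvPolynomial σ B →ₐ[B] (MvPolynomial σ B)[X]}
    (h : ∀ i, (Ψ (X i)).coeff 0 = X i) : IsDeformation Ψ := by
  have hid : Polynomial.constantCoeff.comp (Ψ : MvPolynomial σ B →+* _) = RingHom.id _ := by
    apply MvPolynomial.ringHom_ext
    · intro b
      simp [← algebraMap_eq, Polynomial.algebraMap_apply]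
    · simpa using h
  exact RingHom.congr_fun hid

lemma exists_specialize_zero [IsDomain B] [UniqueFactorizationMonoid B] [Finite σ]
    {Ψ : MvPolynomial σ B[X] →ₐ[B[X]] (MvPolynomial σ B[X])[X]} (hΨ : IsDeformation Ψ)
    (hne : ∃ l, Ψ (X l) ≠ Polynomial.C (X l)) {f : MvPolynomial σ B[X]}
    (hf : Ψ f = Polynomial.C f) :
    ∃ Ψ₀ : MvPolynomial σ B →ₐ[B] (MvPolynomial σ B)[X], IsDeformation Ψ₀ ∧
      (∃ l, Ψ₀ (X l) ≠ Polynomial.C (X l)) ∧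
      Ψ₀ (specialize 0 f) = Polynomial.C (specialize 0 f) := by
  have hF : ∃ l, ∃ i ≠ 0, (Ψ (X l)).coeff i ≠ 0 := by
    contrapose! hne
    intro l
    ext1 i
    by_cases hi : i = 0
    · simp [hi, hΨ (X l)]
    · simp [hne l i hi, Polynomial.coeff_C_of_ne_zero hi]
  obtain ⟨q, m, G, hq, hG, l, i, hi, hli⟩ := exists_rescale_eq_map_ramify hF
  have hr : (C Polynomial.X ^ m : MvPolynomial σ B[X]) ≠ 0 := pow_ne_zero _ C_X_ne_zero
  refine ⟨aeval fun l => (G l).map (specialize 0), of_X fun l => ?_, ⟨l, fun h => hli ?_⟩, ?_⟩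
  · have h := congrArg (fun P => specialize 0 (P.coeff 0)) (hG l)
    simpa [coeff_rescale, hΨ (X l)] using h
  · simpa [Polynomial.coeff_C_of_ne_zero hi] using congrArg (fun P => P.coeff i) h
  · have hfix : aeval G (ramify q f) = Polynomial.C (ramify q f) := rescale_injective hr <| by
      rw [rescale_aeval_ramify hG, hf, Polynomial.map_C, rescale_C]
    rw [← specialize_zero_ramify hq, aeval_specialize, hfix, Polynomial.map_C]

end MvPolynomial

end IsDeformation

/-! ### The subring `k[x, t, u]` -/

lemma ringHom_ext_of_polynomial {σ B W : Type*} [CommSemiring B] [Semiring W]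
    {f g : MvPolynomial σ B[X] →+* W}
    (hC : ∀ b, f (C (Polynomial.C b)) = g (C (Polynomial.C b)))
    (hx : f (C Polynomial.X) = g (C Polynomial.X)) (hX : ∀ i, f (X i) = g (X i)) : f = g :=
  MvPolynomial.ringHom_ext
    (RingHom.congr_fun (Polynomial.ringHom_ext (f := f.comp C) (g := g.comp C) hC hx)) hX

namespace SL2Ring

/-- The inclusion of `k[x][u, t]`, written as `k[x][X₀, X₁]`, into `k[SL₂]`. -/
def ofPolynomial : MvPolynomial (Fin 2) k[X] →ₐ[k] SL2Ring k :=
  aevalTower (Polynomial.aeval x) ![u, t]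

@[simp] lemma ofPolynomial_C (p : k[X]) : ofPolynomial (C p) = Polynomial.aeval (x (k := k)) p := by
  simp [ofPolynomial]

@[simp] lemma ofPolynomial_X_zero : ofPolynomial (k := k) (X 0) = u := by simp [ofPolynomial]

@[simp] lemma ofPolynomial_X_one : ofPolynomial (k := k) (X 1) = t := by simp [ofPolynomial]

lemma ofPolynomial_injective : Function.Injective (ofPolynomial (k := k)) := by
  let K := FractionRing (MvPolynomial (Fin 2) k[X])
  let ι := algebraMap (MvPolynomial (Fin 2) k[X]) K
  have hx : ι (C Polynomial.X) ≠ 0 := by simp [ι]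
  let g : SL2Ring k →ₐ[k] K := lift (ι (X 1)) (ι (X 0)) (ι (C Polynomial.X))
    ((ι (X 1) * ι (X 0) + 1) / ι (C Polynomial.X)) (mul_div_cancel₀ _ hx)
  have hg : g.toRingHom.comp ofPolynomial.toRingHom = ι := by
    apply ringHom_ext_of_polynomial
    · intro b
      simp [ι, IsScalarTower.algebraMap_apply k (MvPolynomial (Fin 2) k[X]) K]
    · simp [g]
    · intro i
      fin_cases i <;> simp [g]
  refine Function.Injective.of_comp (f := g) ?_
  change Function.Injective (g.toRingHom.comp ofPolynomial.toRingHom)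
  rw [hg]
  exact IsFractionRing.injective _ K

lemma mem_of_generators (D : Subalgebra k (SL2Ring k)) (ht : t ∈ D) (hu : u ∈ D) (hx : x ∈ D)
    (hy : y ∈ D) (r : SL2Ring k) : r ∈ D := by
  have h : ⊤ ≤ D.comap (Ideal.Quotient.mkₐ k (Ideal.span {sl2Rel k})) := by
    rw [← adjoin_range_X, Algebra.adjoin_le_iff]
    rintro _ ⟨i, rfl⟩
    fin_cases i <;> assumption
  obtain ⟨p, rfl⟩ := Ideal.Quotient.mk_surjective r
  exact h (Algebra.mem_top (x := p))

lemma x_mem_range_ofPolynomial : x ∈ (ofPolynomial (k := k)).range :=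
  ⟨C Polynomial.X, by simp⟩

lemma exists_pow_mul_mem_range (r : SL2Ring k) :
    ∃ n, x ^ n * r ∈ (ofPolynomial (k := k)).range := by
  have hx := x_mem_range_ofPolynomial (k := k)
  have ht : t ∈ (ofPolynomial (k := k)).range := ⟨X 1, by simp⟩
  have hu : u ∈ (ofPolynomial (k := k)).range := ⟨X 0, by simp⟩
  let D : Subalgebra k (SL2Ring k) :=
    { carrier := {r | ∃ n, x ^ n * r ∈ (ofPolynomial (k := k)).range}
      mul_mem' := by
        rintro a b ⟨n, hn⟩ ⟨m, hm⟩
        exact ⟨n + m, by rw [pow_add, mul_mul_mul_comm]; exact mul_mem hn hm⟩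
      add_mem' := by
        rintro a b ⟨n, hn⟩ ⟨m, hm⟩
        refine ⟨n + m, ?_⟩
        rw [show x ^ (n + m) * (a + b) = x ^ m * (x ^ n * a) + x ^ n * (x ^ m * b) by ring]
        exact add_mem (mul_mem (pow_mem hx m) hn) (mul_mem (pow_mem hx n) hm)
      algebraMap_mem' := fun a => ⟨0, by simp⟩ }
  refine mem_of_generators D ⟨0, by simpa using ht⟩ ⟨0, by simpa using hu⟩ ⟨0, by simpa using hx⟩
    ⟨1, ?_⟩ r
  rw [pow_one, x_mul_y]
  exact add_mem (mul_mem ht hu) (one_mem _)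

lemma mul_X_add_one_dvd_specialize_zero {s : MvPolynomial (Fin 2) k[X]}
    (h : x ∣ ofPolynomial s) : (X 0 * X 1 + 1 : MvPolynomial (Fin 2) k) ∣ specialize 0 s := by
  let π := Ideal.Quotient.mk (Ideal.span {(X 0 * X 1 + 1 : MvPolynomial (Fin 2) k)})
  have hπ : ∀ p, π p = 0 ↔ X 0 * X 1 + 1 ∣ p := fun p =>
    Ideal.Quotient.eq_zero_iff_mem.trans Ideal.mem_span_singleton
  have hw : π (X 0) * π (X 1) + 1 = 0 := (hπ (X 0 * X 1 + 1)).2 dvd_rfl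
  let g : SL2Ring k →ₐ[k] _ := lift (π (X 1)) (π (X 0)) 0 0 (by
    rw [mul_zero, mul_comm (π (X 1)), hw])
  have hg : g.toRingHom.comp ofPolynomial.toRingHom = π.comp (specialize 0) := by
    apply ringHom_ext_of_polynomial
    · intro b
      have hb : π (C b) = algebraMap k _ b := rfl
      simp [hb]
    · simp [g]
    · intro i
      fin_cases i <;> simp [g]
  rw [← hπ, ← RingHom.comp_apply, ← hg]
  obtain ⟨r, hr⟩ := h
  simp [hr, g]

lemma exists_pow_mul_eq_ofPolynomial (r : SL2Ring k) :
    ∃ n f, x ^ n * r = ofPolynomial f ∧ (n = 0 ∨ specialize 0 f ≠ 0 ∧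
      (X 0 * X 1 + 1 : MvPolynomial (Fin 2) k) ∣ specialize 0 f) := by
  classical
  have hex := exists_pow_mul_mem_range r
  obtain ⟨f, hf⟩ := Nat.find_spec hex
  refine ⟨Nat.find hex, f, hf.symm, Nat.eq_zero_or_pos _ |>.imp_right fun hpos => ?_⟩
  obtain ⟨n, hn⟩ := Nat.exists_eq_succ_of_ne_zero hpos.ne'
  replace hf : ofPolynomial f = x * (x ^ n * r) := by
    rw [← mul_assoc, ← pow_succ', ← Nat.succ_eq_add_one, ← hn]
    exact hf
  refine ⟨fun hf₀ => ?_, mul_X_add_one_dvd_specialize_zero ⟨_, hf⟩⟩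
  obtain ⟨g, rfl⟩ := (C_X_dvd_iff f).2 hf₀
  refine Nat.find_min hex (hn ▸ Nat.lt_succ_self n) ⟨g, isLeftRegular_x ?_⟩
  simpa using hf

end SL2Ring

namespace SL2Ring

lemma exists_map_ofPolynomial_eq_rescale {P : (SL2Ring k)[X]}
    (hP : P.coeff 0 ∈ (ofPolynomial (k := k)).range) :
    ∃ N, ∀ M ≥ N, ∃ F : (MvPolynomial (Fin 2) k[X])[X],
      F.map ofPolynomial.toRingHom = rescale (x ^ M) P := by
  have hx := x_mem_range_ofPolynomial (k := k)
  choose n hn using exists_pow_mul_mem_range (k := k)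
  refine ⟨P.support.sup fun i => n (P.coeff i), fun M hM => ?_⟩
  have hcoeff : ∀ i, x ^ M * P.coeff i ∈ (ofPolynomial (k := k)).range := fun i => by
    by_cases hi : i ∈ P.support
    · obtain ⟨d, rfl⟩ := Nat.exists_eq_add_of_le
        ((Finset.le_sup (f := fun i => n (P.coeff i)) hi).trans hM)
      rw [pow_add, mul_comm (x ^ _), mul_assoc]
      exact mul_mem (pow_mem hx d) (hn _)
    · simp [Polynomial.notMem_support_iff.1 hi]
  refine (Polynomial.mem_lifts _).1 ((Polynomial.lifts_iff_coeff_lifts _).2 fun i => ?_)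
  change _ ∈ (ofPolynomial (k := k)).range
  rw [coeff_rescale]
  cases i with
  | zero => simpa using hP
  | succ i =>
    rw [pow_succ', ← mul_assoc, mul_comm (P.coeff _)]
    exact mul_mem (hcoeff _) (pow_mem (pow_mem hx M) i)

section Deformation

variable {ψ : SL2Ring k →ₐ[k] (SL2Ring k)[X]}

lemma exists_deformation_of_polynomial (hψ : IsDeformation ψ) (hx : ψ x = Polynomial.C x) :
    ∃ (N : ℕ) (Ψ : MvPolynomial (Fin 2) k[X] →ₐ[k[X]] (MvPolynomial (Fin 2) k[X])[X]),
      ∀ s, (Ψ s).map ofPolynomial.toRingHom = rescale (x ^ N) (ψ (ofPolynomial s)) := by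
  have hX : ∀ l, ∃ N, ∀ M ≥ N, ∃ F : (MvPolynomial (Fin 2) k[X])[X],
      F.map ofPolynomial.toRingHom = rescale (x ^ M) (ψ (ofPolynomial (X l))) := fun l =>
    exists_map_ofPolynomial_eq_rescale (by rw [hψ]; exact ⟨X l, rfl⟩)
  choose N hN using hX
  choose F hF using fun l => hN l (N 0 + N 1) (by fin_cases l <;> simp)
  refine ⟨N 0 + N 1, aeval F, fun s => ?_⟩
  have h : (Polynomial.mapRingHom ofPolynomial.toRingHom).comp (aeval F).toRingHom =
      (rescale (x ^ (N 0 + N 1))).toRingHom.comp (ψ.toRingHom.comp ofPolynomial.toRingHom) := by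
    apply ringHom_ext_of_polynomial
    · intro b
      simp [Polynomial.algebraMap_apply]
    · simp [Polynomial.algebraMap_apply, algebraMap_eq, hx]
    · simpa using hF
  exact RingHom.congr_fun h s

lemma eq_C_of_apply_t_of_apply_u (hx : ψ x = Polynomial.C x) (ht : ψ t = Polynomial.C t)
    (hu : ψ u = Polynomial.C u) (r : SL2Ring k) : ψ r = Polynomial.C r := by
  have hy : ψ y = Polynomial.C y := by
    refine mul_left_cancel₀ (a := ψ x) (by simp [hx, x_ne_zero]) ?_
    rw [← map_mul, x_mul_y, map_add, map_mul, ht, hu, hx, map_one, ← map_mul, ← map_mul, x_mul_y,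
      map_add, map_one]
  have h : ψ = Polynomial.CAlgHom := algHom_ext ht hu hx hy
  rw [h]
  rfl

lemma mem_range_of_isDeformation (hψ : IsDeformation ψ) (hx : ψ x = Polynomial.C x)
    (hne : ∃ a, ψ a ≠ Polynomial.C a) {r : SL2Ring k} (hr : ψ r = Polynomial.C r) :
    r ∈ (ofPolynomial (k := k)).range := by
  obtain ⟨n, f, hf, rfl | ⟨hf₀, hdvd⟩⟩ := exists_pow_mul_eq_ofPolynomial r
  · exact ⟨f, by simpa using hf.symm⟩
  exfalso
  obtain ⟨N, Ψ, hΨ⟩ := exists_deformation_of_polynomial hψ hx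
  have hxN : (x ^ N : SL2Ring k) ≠ 0 := pow_ne_zero N x_ne_zero
  have hC : ∀ s, Ψ s = Polynomial.C s ↔
      ψ (ofPolynomial s) = Polynomial.C (ofPolynomial s) := fun s => by
    rw [← (Polynomial.map_injective ofPolynomial.toRingHom ofPolynomial_injective).eq_iff, hΨ,
      Polynomial.map_C]
    exact (rescale_injective hxN).eq_iff' (rescale_C _ _)
  have hΨ_deformation : IsDeformation Ψ := fun s => ofPolynomial_injective <| by
    simpa [coeff_rescale, hψ _] using congrArg (fun P => P.coeff 0) (hΨ s)
  have hΨ_ne : ∃ l, Ψ (X l) ≠ Polynomial.C (X l) := by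
    contrapose! hne
    exact eq_C_of_apply_t_of_apply_u hx (by simpa [hC] using hne 1) (by simpa [hC] using hne 0)
  have hΨf : Ψ f = Polynomial.C f := by rw [hC, ← hf]; simp [hx, hr]
  obtain ⟨Ψ₀, hΨ₀, ⟨l, hl⟩, hfix⟩ := hΨ_deformation.exists_specialize_zero hΨ_ne hΨf
  have h₀ : IsDeformation (Ψ₀ : MvPolynomial (Fin 2) k →+* _) := hΨ₀
  fin_cases l
  · exact hl (h₀.apply_eq_C_of_mul_add_one_dvd hf₀ hfix
      (mul_ne_zero (X_ne_zero 0) (X_ne_zero 1)) hdvd)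
  · exact hl (h₀.apply_eq_C_of_mul_add_one_dvd hf₀ hfix
      (mul_ne_zero (X_ne_zero 1) (X_ne_zero 0)) (by rwa [mul_comm]))

end Deformation

/-- The action `u ↦ u + x τ`, `y ↦ y + t τ` of the additive group on `SL₂` by right
multiplication. -/
def unipotent : SL2Ring k →ₐ[k] (SL2Ring k)[X] :=
  lift (Polynomial.C t) (Polynomial.C u + Polynomial.C x * Polynomial.X) (Polynomial.C x)
    (Polynomial.C y + Polynomial.C t * Polynomial.X) (by
      have h := congrArg (Polynomial.C : SL2Ring k → (SL2Ring k)[X]) x_mul_y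
      simp only [map_mul, map_add, map_one] at h
      linear_combination h)

lemma isDeformation_unipotent : IsDeformation (unipotent (k := k)) := by
  have h : ((Polynomial.aeval (0 : SL2Ring k)).restrictScalars k).comp unipotent =
      AlgHom.id k _ := by
    apply algHom_ext <;> simp [unipotent]
  intro r
  rw [Polynomial.coeff_zero_eq_aeval_zero]
  exact DFunLike.congr_fun h r

section Descent

variable {Φ : SL2Ring k ≃ₐ[k] SL2Ring k}

lemma apply_t_mem_range (hΦ : Φ x = x) : Φ t ∈ (ofPolynomial (k := k)).range := by
  let ψ : SL2Ring k →ₐ[k] (SL2Ring k)[X] :=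
    (Polynomial.mapAlgHom (Φ : SL2Ring k →ₐ[k] SL2Ring k)).comp
      (unipotent.comp (Φ.symm : SL2Ring k →ₐ[k] SL2Ring k))
  have hψ : ∀ r, ψ (Φ r) = (unipotent r).map (Φ : SL2Ring k →+* SL2Ring k) := fun r => by
    simp [ψ]
  have hdef : IsDeformation ψ := fun r => by
    obtain ⟨r, rfl⟩ := Φ.surjective r
    rw [hψ, Polynomial.coeff_map, isDeformation_unipotent]
    rfl
  refine mem_range_of_isDeformation hdef ?_ ⟨Φ u, fun h => ?_⟩ ?_
  · conv_lhs => rw [← hΦ, hψ]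
    simp [unipotent, hΦ]
  · rw [hψ] at h
    simp [unipotent, hΦ, x_ne_zero] at h
  · rw [hψ]
    simp [unipotent]

lemma apply_u_mem_range (hΦ : Φ x = x) : Φ u ∈ (ofPolynomial (k := k)).range := by
  have h := apply_t_mem_range (Φ := Φ * swap) (by simp [hΦ])
  rwa [AlgEquiv.mul_apply, swap_t] at h

lemma exists_descent (hΦ : Φ x = x) :
    ∃ φ : MvPolynomial (Fin 2) k[X] →ₐ[k[X]] MvPolynomial (Fin 2) k[X],
      ∀ s, ofPolynomial (φ s) = Φ (ofPolynomial s) := by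
  obtain ⟨f, hf : ofPolynomial f = Φ u⟩ := apply_u_mem_range hΦ
  obtain ⟨g, hg : ofPolynomial g = Φ t⟩ := apply_t_mem_range hΦ
  refine ⟨aeval ![f, g], fun s => ?_⟩
  have h : ofPolynomial.toRingHom.comp (aeval ![f, g]).toRingHom =
      (Φ : SL2Ring k →+* SL2Ring k).comp ofPolynomial.toRingHom := by
    apply ringHom_ext_of_polynomial
    · intro b
      simp [algebraMap_eq]
    · simp [algebraMap_eq, hΦ]
    · intro i
      fin_cases i <;> simp [hf, hg]
  exact RingHom.congr_fun h s

lemma exists_algEquiv_descent (hΦ : Φ x = x) :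
    ∃ φ : MvPolynomial (Fin 2) k[X] ≃ₐ[k[X]] MvPolynomial (Fin 2) k[X],
      ∀ s, ofPolynomial (φ s) = Φ (ofPolynomial s) := by
  obtain ⟨φ, hφ⟩ := exists_descent hΦ
  obtain ⟨φ', hφ'⟩ := exists_descent (Φ := Φ.symm) ((AlgEquiv.symm_apply_eq Φ).2 hΦ.symm)
  refine ⟨AlgEquiv.ofAlgHom φ φ' ?_ ?_, hφ⟩ <;>
  exact AlgHom.ext fun s => ofPolynomial_injective (by simp [hφ, hφ'])

end Descent

end SL2Ring

/-! ### Extensions fix `x` -/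

namespace SL2Ring

lemma exists_eq_algebraMap_of_isUnit {r : SL2Ring k} (hr : IsUnit r) :
    ∃ a : kˣ, r = algebraMap k _ a := by
  have hmem : ∀ s : SL2Ring k, IsUnit s → s ∈ (ofPolynomial (k := k)).range := fun s hs => by
    refine mem_range_of_isDeformation isDeformation_unipotent (by simp [unipotent])
      ⟨u, by simp [unipotent, x_ne_zero]⟩ ?_
    obtain ⟨s', -, hs'⟩ := Polynomial.isUnit_iff.1 (hs.map unipotent)
    have h := isDeformation_unipotent s
    rw [← hs', Polynomial.coeff_C_zero] at h
    rw [← hs', h]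
  obtain ⟨r', hr'⟩ := hr.exists_right_inv
  obtain ⟨f, rfl⟩ := hmem r hr
  obtain ⟨g, rfl⟩ := hmem r' (IsUnit.of_mul_eq_one_right _ hr')
  have hfg : f * g = 1 := ofPolynomial_injective (by simpa using hr')
  obtain ⟨p, hp, rfl⟩ := isUnit_iff_eq_C_of_isReduced.1 (IsUnit.of_mul_eq_one _ hfg)
  obtain ⟨a, ha, rfl⟩ := Polynomial.isUnit_iff.1 hp
  exact ⟨ha.unit, by simp⟩

/-- The restriction of functions on `SL₂` to the plane `x = c`, with coordinates `(u, t)`. -/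
def fiber (c : kˣ) : SL2Ring k →ₐ[k] MvPolynomial (Fin 2) k :=
  lift (X 1) (X 0) (C (c : k)) (C (↑c⁻¹ : k) * (X 1 * X 0 + 1)) (by
    rw [← mul_assoc, ← C_mul, Units.mul_inv, C_1, one_mul])

lemma fiber_eq_zero_iff {c : kˣ} {r : SL2Ring k} :
    fiber c r = 0 ↔ x - algebraMap k _ ↑c ∣ r := by
  refine ⟨fun h => ?_, ?_⟩
  · let I : Ideal (SL2Ring k) := Ideal.span {x - algebraMap k _ ↑c}
    let π := Ideal.Quotient.mkₐ k I
    have hx : π x = algebraMap k _ ↑c :=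
      ((Ideal.Quotient.eq (I := I)).2 (Ideal.mem_span_singleton_self _)).trans (π.commutes ↑c)
    have hπ : (aeval ![π u, π t]).comp (fiber c) = π := by
      refine algHom_ext_of_isLeftRegular (W := SL2Ring k ⧸ I) ?_ ?_ ?_ ?_
      · simpa [fiber] using (c.isUnit.map (algebraMap k (SL2Ring k ⧸ I))).isRegular.left
      · simp [fiber]
      · simp [fiber]
      · simp [fiber, hx]
    rw [← Ideal.mem_span_singleton, ← Ideal.Quotient.eq_zero_iff_mem]
    change π r = 0
    rw [← hπ, AlgHom.comp_apply, h, map_zero]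
  · rintro ⟨s, rfl⟩
    simp [fiber, algebraMap_eq]

lemma rhoLamStar_one_eq_fiber : rhoLamStar k 1 = fiber 1 := by
  refine algHom_ext_of_isLeftRegular ?_ ?_ ?_ ?_
  · simpa using (isRegular_one (R := MvPolynomial (Fin 2) k)).left
  all_goals simp [fiber]

lemma not_x_dvd_t_sub_algebraMap (a : k) : ¬(x : SL2Ring k) ∣ t - algebraMap k _ a := by
  let g : SL2Ring k →ₐ[k] LaurentPolynomial k :=
    lift (LaurentPolynomial.T 1) (-LaurentPolynomial.T (-1)) 0 0 (by
      rw [mul_neg, ← LaurentPolynomial.T_add]; simp)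
  intro h
  have hg := map_dvd g h
  have hX : Polynomial.toLaurent (Polynomial.X : k[X]) = Polynomial.toLaurent (Polynomial.C a) := by
    simpa [g, sub_eq_zero, LaurentPolynomial.algebraMap_apply] using hg
  exact Polynomial.X_ne_C a (Polynomial.toLaurent_injective hX)

lemma not_associated_x_sub_algebraMap (Φ : SL2Ring k ≃ₐ[k] SL2Ring k) (c : kˣ) :
    ¬Associated (Φ x) (x - algebraMap k _ ↑c) := by
  intro h
  have hx : fiber c (Φ x) = 0 := fiber_eq_zero_iff.2 h.symm.dvd
  have htu : fiber c (Φ t) * -fiber c (Φ u) = 1 := by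
    have hxy := congrArg (fun r => fiber c (Φ r)) (x_mul_y (k := k))
    simp only [map_mul, map_add, map_one, hx] at hxy
    linear_combination hxy
  obtain ⟨a, -, ha⟩ := isUnit_iff_eq_C_of_isReduced.1 (IsUnit.of_mul_eq_one _ htu)
  have hdvd : x - algebraMap k _ ↑c ∣ Φ (t - algebraMap k _ a) :=
    fiber_eq_zero_iff.1 (by simp [ha, algebraMap_eq])
  exact not_x_dvd_t_sub_algebraMap a ((map_dvd_iff Φ).1 (h.dvd.trans hdvd))

lemma apply_x_eq {β : PlaneAut k} {Φ : SL2Ring k ≃ₐ[k] SL2Ring k}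
    (h : ∀ r, rhoLamStar k 1 (Φ r) = β (rhoLamStar k 1 r)) : Φ x = x := by
  have hker : ∀ r, rhoLamStar k 1 r = 0 ↔ x - 1 ∣ r := fun r => by
    simpa [rhoLamStar_one_eq_fiber] using fiber_eq_zero_iff (c := 1) (r := r)
  have hassoc : Associated (x - 1) (Φ (x - 1)) := by
    refine associated_of_dvd_dvd ((hker _).1 (by simp [h])) ?_
    rw [← map_dvd_iff Φ.symm, AlgEquiv.symm_apply_apply, ← hker]
    exact (map_eq_zero_iff β β.injective).1 (by rw [← h]; simp)
  obtain ⟨v, hv⟩ := hassoc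
  obtain ⟨m, hm⟩ := exists_eq_algebraMap_of_isUnit v.isUnit
  rw [hm, map_sub, map_one] at hv
  obtain rfl | hne := eq_or_ne m 1
  · simpa using hv.symm
  have hc : (1 - ↑m⁻¹ : k) ≠ 0 := by
    rwa [sub_ne_zero, Ne, eq_comm, Units.val_eq_one, inv_eq_one]
  refine absurd ?_ (not_associated_x_sub_algebraMap Φ (Units.mk0 _ hc))
  refine Associated.symm ⟨m.map (algebraMap k (SL2Ring k)).toMonoidHom, ?_⟩
  have hmm : algebraMap k (SL2Ring k) ↑m⁻¹ * algebraMap k (SL2Ring k) m = 1 := by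
    rw [← map_mul, Units.inv_mul, map_one]
  simp only [Units.coe_map, Units.val_mk0, map_sub, map_one]
  change _ * algebraMap k (SL2Ring k) m = _
  linear_combination hv + hmm

end SL2Ring

/-! ### The fibre `x = 0` -/

lemma exists_algEquiv_map {σ B B' : Type*} [CommSemiring B] [CommSemiring B'] (f : B →+* B')
    (e : MvPolynomial σ B ≃ₐ[B] MvPolynomial σ B) :
    ∃ e' : MvPolynomial σ B' ≃ₐ[B'] MvPolynomial σ B', ∀ s, e' (map f s) = map f (e s) := by
  let F (φ : MvPolynomial σ B →ₐ[B] MvPolynomial σ B) : MvPolynomial σ B' →ₐ[B'] _ :=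
    aeval fun i => map f (φ (X i))
  have hF : ∀ φ s, F φ (map f s) = map f (φ s) := fun φ s => by
    have h : (F φ).toRingHom.comp (map f) = (map f).comp φ.toRingHom := by
      apply MvPolynomial.ringHom_ext
      · intro b
        simp [← algebraMap_eq, F]
      · simp [F]
    exact RingHom.congr_fun h s
  have hX : ∀ φ i, F φ (X i) = map f (φ (X i)) := fun φ i => aeval_X _ i
  refine ⟨AlgEquiv.ofAlgHom (F e) (F e.symm) ?_ ?_, hF e⟩ <;>
  · apply MvPolynomial.algHom_ext
    intro i
    simp [hX, hF]

lemma irreducible_C_mul_X_mul_X_add_C {a b : k} (ha : a ≠ 0) (hb : b ≠ 0) :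
    Irreducible (C a * X 0 * X 1 + C b : MvPolynomial (Fin 2) k) := by
  refine irreducible_mul_X_add _ _ 1 ?_ ?_ ?_ ?_
  · simp [ha]
  · simp [vars_C_mul _ ha]
  · simp
  · exact (IsUnit.mk0 b hb).map C |>.isRelPrime_right

namespace PlaneAut

variable {β : PlaneAut k}

lemma irreducible_apply_X (β : PlaneAut k) (i : Fin 2) : Irreducible (β (X i)) :=
  (MulEquiv.irreducible_iff β).2 X_prime.irreducible

lemma jacobianChar_eq_one_of_X_dvd (h : β (X 0) * β (X 1) = X 0 * X 1) (hdvd : X 0 ∣ β (X 0)) :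
    jacobianChar β = 1 := by
  obtain ⟨v, hv⟩ := X_prime.irreducible.dvd_irreducible_iff_associated (irreducible_apply_X β 0)
    |>.1 hdvd
  obtain ⟨a, ha, hva⟩ := isUnit_iff_eq_C_of_isReduced.1 v.isUnit
  obtain ⟨a, rfl⟩ := ha
  rw [hva] at hv
  have h₁ : C (a : k) * β (X 1) = X 1 :=
    mul_left_cancel₀ (X_ne_zero 0) (by rw [← h, ← hv]; ring)
  have hβ : β = diagonal a a⁻¹ := by
    refine PlaneAut.ext (by rw [← hv, diagonal_X_zero, mul_comm]) ?_
    refine mul_left_cancel₀ (C_ne_zero.2 a.ne_zero) ?_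
    rw [h₁, diagonal_X_one, ← mul_assoc, ← C_mul, Units.mul_inv, C_1, one_mul]
  rw [hβ, jacobianChar_diagonal, mul_inv_cancel]

lemma apply_mul_apply_eq_of_dvd (h : X 0 * X 1 + 1 ∣ β (X 0 * X 1 + 1)) :
    β (X 0) * β (X 1) = X 0 * X 1 := by
  have hirr := irreducible_C_mul_X_mul_X_add_C (one_ne_zero (α := k)) one_ne_zero
  rw [C_1, one_mul] at hirr
  obtain ⟨v, hv⟩ := (hirr.dvd_irreducible_iff_associated ((MulEquiv.irreducible_iff β).2 hirr)).1 h
  obtain ⟨m, hm, hvm⟩ := isUnit_iff_eq_C_of_isReduced.1 v.isUnit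
  rw [hvm, map_add, map_mul, map_one] at hv
  replace hv : β (X 0) * β (X 1) = C m * X 0 * X 1 + C (m - 1) := by
    rw [C_sub, C_1]
    linear_combination -hv
  obtain rfl | hne := eq_or_ne m 1
  · simpa using hv
  have hirr' := irreducible_C_mul_X_mul_X_add_C hm.ne_zero (sub_ne_zero.2 hne)
  obtain h₀ | h₁ := hirr'.isUnit_or_isUnit hv.symm
  · exact absurd h₀ (irreducible_apply_X β 0).not_isUnit
  · exact absurd h₁ (irreducible_apply_X β 1).not_isUnit

lemma jacobianChar_eq_one_or_neg_one_of_dvd (h : X 0 * X 1 + 1 ∣ β (X 0 * X 1 + 1)) :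
    jacobianChar β = 1 ∨ jacobianChar β = -1 := by
  have hprod := apply_mul_apply_eq_of_dvd h
  obtain h₀ | h₁ := X_prime.dvd_or_dvd (Dvd.intro _ hprod.symm)
  · exact .inl (jacobianChar_eq_one_of_X_dvd hprod h₀)
  · have hswap : jacobianChar (β * swap) = 1 :=
      jacobianChar_eq_one_of_X_dvd (by simpa [mul_comm] using hprod) (by simpa using h₁)
    rw [map_mul, jacobianChar_swap, mul_neg, mul_one] at hswap
    exact .inr (neg_eq_iff_eq_neg.1 hswap)

end PlaneAut

namespace SL2Ring

lemma rhoLamStar_ofPolynomial (s : MvPolynomial (Fin 2) k[X]) :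
    rhoLamStar k 1 (ofPolynomial s) = specialize 1 s := by
  have h : (rhoLamStar k 1).toRingHom.comp ofPolynomial.toRingHom = specialize 1 := by
    apply ringHom_ext_of_polynomial
    · intro b
      simp [algebraMap_eq]
    · simp
    · intro i
      fin_cases i <;> simp
  exact RingHom.congr_fun h s

lemma jacobianChar_eq_one_or_neg_one_of_mem_liftable {β : PlaneAut k} (hβ : β ∈ liftable k) :
    jacobianChar β = 1 ∨ jacobianChar β = -1 := by
  obtain ⟨Φ, hΦ⟩ := mem_liftable_iff_exists.1 hβ
  have hx := apply_x_eq hΦ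
  obtain ⟨φ, hφ⟩ := exists_algEquiv_descent hx
  obtain ⟨b, -, hb⟩ := Polynomial.isUnit_iff.1 (jacobianChar φ).isUnit
  obtain ⟨β₀, hβ₀⟩ := exists_algEquiv_map (Polynomial.evalRingHom 0) φ
  have h₀ : (jacobianChar β₀ : k) = b := by
    rw [jacobianChar_eq_map (Polynomial.evalRingHom 0) fun i => by simpa using hβ₀ (X i), ← hb]
    simp
  have h₁ : (jacobianChar β : k) = b := by
    rw [jacobianChar_eq_map (e := φ) (Polynomial.evalRingHom 1) fun i => ?_, ← hb]
    · simp
    · rw [← specialize, ← rhoLamStar_ofPolynomial, hφ, hΦ, rhoLamStar_ofPolynomial, map_X]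
  have hxy : ofPolynomial (X 0 * X 1 + 1) = (x * y : SL2Ring k) := by simp [x_mul_y, mul_comm]
  have hxφ : x ∣ ofPolynomial (φ (X 0 * X 1 + 1)) := ⟨Φ y, by rw [hφ, hxy, map_mul, hx]⟩
  have hdvd : X 0 * X 1 + 1 ∣ β₀ (X 0 * X 1 + 1) := by
    have h := hβ₀ (X 0 * X 1 + 1)
    rw [map_add, map_mul, map_X, map_X, map_one] at h
    rw [h]
    exact mul_X_add_one_dvd_specialize_zero hxφ
  rw [show jacobianChar β = jacobianChar β₀ from Units.ext (h₁.trans h₀.symm)]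
  exact PlaneAut.jacobianChar_eq_one_or_neg_one_of_dvd hdvd

lemma mem_liftable_iff {β : PlaneAut k} :
    β ∈ liftable k ↔ jacobianChar β = 1 ∨ jacobianChar β = -1 :=
  ⟨jacobianChar_eq_one_or_neg_one_of_mem_liftable, fun hβ =>
    hβ.elim mem_liftable_of_jacobianChar_eq_one mem_liftable_of_jacobianChar_eq_neg_one⟩

end SL2Ring

/-! ### Embeddings with image `ρ₁(𝔸²)` -/

lemma exists_algEquiv_of_ker_eq {R A B C : Type*} [CommSemiring R] [CommRing A] [CommRing B]
    [CommRing C] [Algebra R A] [Algebra R B] [Algebra R C] {f : A →ₐ[R] B} {g : A →ₐ[R] C}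
    (hf : Function.Surjective f) (hg : Function.Surjective g)
    (h : RingHom.ker g = RingHom.ker f) : ∃ e : B ≃ₐ[R] C, ∀ a, e (f a) = g a := by
  refine ⟨(Ideal.quotientKerAlgEquivOfSurjective hf).symm.trans
    ((Ideal.quotientEquivAlgOfEq R h.symm).trans (Ideal.quotientKerAlgEquivOfSurjective hg)),
    fun a => ?_⟩
  have : (Ideal.quotientKerAlgEquivOfSurjective hf).symm (f a) = Ideal.Quotient.mk _ a := by
    rw [AlgEquiv.symm_apply_eq]
    rfl
  simp [this]

namespace SL2Ring

lemma rhoLamStar_one_surjective : Function.Surjective (rhoLamStar k 1) := fun p =>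
  ⟨aeval ![u, t] p, by
    have h : (rhoLamStar k 1).comp (aeval ![u, t]) = AlgHom.id k _ := by
      ext i; fin_cases i <;> simp
    exact DFunLike.congr_fun h p⟩

lemma rhoLamStar_eq_diagonal_comp (l : kˣ) (r : SL2Ring k) :
    rhoLamStar k l r = PlaneAut.diagonal l 1 (rhoLamStar k 1 r) := by
  have h : rhoLamStar k l = (PlaneAut.diagonal l 1 : MvPolynomial (Fin 2) k →ₐ[k] _).comp
      (rhoLamStar k 1) := by
    refine algHom_ext_of_isLeftRegular ?_ ?_ ?_ ?_
    · simpa using (isRegular_one (R := MvPolynomial (Fin 2) k)).left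
    all_goals simp
  exact DFunLike.congr_fun h r

lemma exists_comp_eq_iff {l : kˣ} {β : PlaneAut k} {σ : SL2Ring k →ₐ[k] MvPolynomial (Fin 2) k}
    (hσ : ∀ r, β (rhoLamStar k 1 r) = σ r) :
    (∃ Φ : SL2Ring k ≃ₐ[k] SL2Ring k, σ = (rhoLamStar k l).comp Φ.toAlgHom) ↔
      jacobianChar β = l ∨ jacobianChar β = -l := by
  have h : (PlaneAut.diagonal l 1)⁻¹ * β ∈ liftable k ↔
      ∃ Φ : SL2Ring k ≃ₐ[k] SL2Ring k, σ = (rhoLamStar k l).comp Φ.toAlgHom := by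
    refine mem_liftable_iff_exists.trans (exists_congr fun Φ => ?_)
    rw [DFunLike.ext_iff]
    refine forall_congr' fun r => ?_
    change _ ↔ σ r = rhoLamStar k l (Φ r)
    rw [← hσ, rhoLamStar_eq_diagonal_comp]
    exact (AlgEquiv.eq_symm_apply (PlaneAut.diagonal l 1)).trans eq_comm
  rw [← h, mem_liftable_iff, map_mul, map_inv, PlaneAut.jacobianChar_diagonal, mul_one,
    inv_mul_eq_iff_eq_mul, inv_mul_eq_iff_eq_mul, mul_one, mul_neg, mul_one]

end SL2Ring

/-- **Theorem 2(1) (Blanc–van Santen).** (a) Every closed embedding `𝔸² ↪ SL₂` with image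
`ρ₁(𝔸²)` is equivalent to `ρ_λ` for some `λ ∈ k*`; (b) `ρ_λ` and `ρ_{λ'}` are equivalent iff
`λ' = ±λ`. -/
theorem embeddings_with_standard_image
    (k : Type*) [Field k] :
    (∀ σ : SL2Ring k →ₐ[k] MvPolynomial (Fin 2) k, Function.Surjective σ →
        RingHom.ker σ = RingHom.ker (rhoLamStar k 1) →
        ∃ lam : k, lam ≠ 0 ∧ ∃ Φ : SL2Ring k ≃ₐ[k] SL2Ring k,
          σ = (rhoLamStar k lam).comp Φ.toAlgHom) ∧
    (∀ lam lam' : k, lam ≠ 0 → lam' ≠ 0 →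
        ((∃ Φ : SL2Ring k ≃ₐ[k] SL2Ring k,
            rhoLamStar k lam' = (rhoLamStar k lam).comp Φ.toAlgHom) ↔
          (lam' = lam ∨ lam' = -lam))) := by
  constructor
  · intro σ hσ hker
    obtain ⟨β, hβ⟩ := exists_algEquiv_of_ker_eq SL2Ring.rhoLamStar_one_surjective hσ hker
    exact ⟨jacobianChar β, Units.ne_zero _, (SL2Ring.exists_comp_eq_iff hβ).2 (.inl rfl)⟩
  · intro lam lam' hlam hlam'
    lift lam to kˣ using hlam.isUnit
    lift lam' to kˣ using hlam'.isUnit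
    rw [SL2Ring.exists_comp_eq_iff fun r => (SL2Ring.rhoLamStar_eq_diagonal_comp lam' r).symm,
      PlaneAut.jacobianChar_diagonal, mul_one, Units.ext_iff, Units.ext_iff, Units.val_neg]
end
end

section
/- Let k be any field and A = k[X,Y,Z]/(XY − Z(Z+1)) the coordinate ring of the smooth quadric Q₂. For every polynomial p ∈ k[t], the assignment X ↦ t·(1 + t·p(t)), Y ↦ p(t), Z ↦ t·p(t) sends XY − Z(Z+1) to 0 and hence induces a k-algebra homomorphism ν_p : A → k[t]; moreover ν_p is surjective. (Equivalently, the morphism ν_p : 𝔸¹ → Q₂, t ↦ (t(1+t·p(t)), p(t), t·p(t)), is a closed embedding.) -/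
open MvPolynomial

noncomputable section

/-- The polynomial `X*Y - Z*(Z+1)` defining the smooth quadric `Q₂` inside `𝔸³`
(variables: `0 = X`, `1 = Y`, `2 = Z`). -/
def q2Rel (k : Type*) [Field k] : MvPolynomial (Fin 3) k := X 0 * X 1 - X 2 * (X 2 + 1)

/-- The coordinate ring `A = k[X,Y,Z]/(XY - Z(Z+1))` of the smooth quadric `Q₂`. -/
abbrev Q2Ring (k : Type*) [Field k] : Type _ := MvPolynomial (Fin 3) k ⧸ Ideal.span {q2Rel k}

/-- The `k`-algebra map `k[X,Y,Z] → k[t]` given by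
`X ↦ t(1 + t·p(t))`, `Y ↦ p(t)`, `Z ↦ t·p(t)`. -/
def nuAux (k : Type*) [Field k] (p : Polynomial k) :
    MvPolynomial (Fin 3) k →ₐ[k] Polynomial k :=
  aeval ![Polynomial.X * (1 + Polynomial.X * p), p, Polynomial.X * p]

/-!
Let `B` be the subalgebra generated by `x = t(1 + tp)`, `y = p` and `z = tp`, and let `a` be the
leading coefficient and `d` the degree of `p`. Multiplying `y = ∑ aᵢ tⁱ` by `t yᵈ` gives
`z yᵈ = ∑ aᵢ t zⁱ yᵈ⁻ⁱ`, and every term with `i < d` equals `aᵢ zⁱ⁺¹ yᵈ⁻¹⁻ⁱ ∈ B`, so the remaining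
term `a t zᵈ` lies in `B`. Since `t zⁿ⁺¹ = x zⁿ - t zⁿ`, the exponent can be lowered to `0`, and
`a t ∈ B`. This yields `t ∈ B` when `a` is a unit, while for `p = 0` one has `x = t`.
-/

open scoped Polynomial

theorem mul_pow_mem_iff_of_mul_one_add_mem {S σ : Type*} [Ring S] [SetLike σ S] [SubringClass σ S]
    {B : σ} {s z : S} (hz : z ∈ B) (hs : s * (1 + z) ∈ B) (n : ℕ) : s * z ^ n ∈ B ↔ s ∈ B := by
  induction n with
  | zero => rw [pow_zero, mul_one]
  | succ n ih =>
    have hsum : s * z ^ (n + 1) + s * z ^ n ∈ B := by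
      have h := mul_mem hs (pow_mem hz n)
      rwa [mul_assoc, one_add_mul, ← pow_succ', add_comm, mul_add] at h
    rw [← ih]
    exact ⟨fun h ↦ (add_mem_cancel_left h).mp hsum, fun h ↦ (add_mem_cancel_right h).mp hsum⟩

section Subalgebra

variable {R S : Type*} [CommRing R] [CommRing S] [Algebra R S] {B : Subalgebra R S} {p : R[X]}
  {t : S}

theorem leadingCoeff_smul_mul_pow_natDegree_mem (hy : p.aeval t ∈ B) (hz : t * p.aeval t ∈ B) :
    p.leadingCoeff • t * (t * p.aeval t) ^ p.natDegree ∈ B := by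
  set y := p.aeval t with hy_def
  set d := p.natDegree
  have expansion : (t * y) * y ^ d =
      ∑ i ∈ Finset.range d, p.coeff i • ((t * y) ^ (i + 1) * y ^ (d - 1 - i)) +
        p.leadingCoeff • t * (t * y) ^ d := by
    calc (t * y) * y ^ d = t * y ^ d * ∑ i ∈ Finset.range (d + 1), p.coeff i • t ^ i := by
          rw [← Polynomial.aeval_eq_sum_range, ← hy_def]; ring
      _ = ∑ i ∈ Finset.range d, t * y ^ d * p.coeff i • t ^ i +
            t * y ^ d * p.leadingCoeff • t ^ d := by
          rw [Finset.mul_sum, Finset.sum_range_succ, Polynomial.coeff_natDegree]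
      _ = ∑ i ∈ Finset.range d, p.coeff i • ((t * y) ^ (i + 1) * y ^ (d - 1 - i)) +
            p.leadingCoeff • t * (t * y) ^ d := by
          congr 1
          · refine Finset.sum_congr rfl fun i hi ↦ ?_
            have hd : d = i + 1 + (d - 1 - i) := by
              have hi' : i < d := Finset.mem_range.mp hi
              lia
            nth_rw 1 [hd]
            simp only [Algebra.smul_def]
            ring
          · simp only [Algebra.smul_def]
            ring
  have hlow : ∑ i ∈ Finset.range d, p.coeff i • ((t * y) ^ (i + 1) * y ^ (d - 1 - i)) ∈ B :=
    sum_mem fun i _ ↦ B.smul_mem (mul_mem (pow_mem hz _) (pow_mem hy _)) _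
  exact (add_mem_cancel_left hlow).mp (expansion ▸ mul_mem hz (pow_mem hy d))

theorem leadingCoeff_smul_mem (hx : t * (1 + t * p.aeval t) ∈ B) (hy : p.aeval t ∈ B)
    (hz : t * p.aeval t ∈ B) : p.leadingCoeff • t ∈ B := by
  refine (mul_pow_mem_iff_of_mul_one_add_mem hz ?_ p.natDegree).mp
    (leadingCoeff_smul_mul_pow_natDegree_mem hy hz)
  rw [smul_mul_assoc]
  exact B.smul_mem hx _

theorem mem_of_eq_zero_or_isUnit_leadingCoeff (hp : p = 0 ∨ IsUnit p.leadingCoeff)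
    (hx : t * (1 + t * p.aeval t) ∈ B) (hy : p.aeval t ∈ B) (hz : t * p.aeval t ∈ B) :
    t ∈ B := by
  rcases hp with rfl | hp
  · simpa using hx
  · exact (Submodule.smul_mem_iff_of_isUnit B.toSubmodule hp).mp (leadingCoeff_smul_mem hx hy hz)

end Subalgebra

theorem surjective_aeval_of_eq_zero_or_isUnit_leadingCoeff {R : Type*} [CommRing R] {p : R[X]}
    (hp : p = 0 ∨ IsUnit p.leadingCoeff) :
    Function.Surjective
      (aeval (R := R) ![Polynomial.X * (1 + Polynomial.X * p), p, Polynomial.X * p]) := by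
  set φ := aeval (R := R) ![Polynomial.X * (1 + Polynomial.X * p), p, Polynomial.X * p]
  have hX : Polynomial.X ∈ φ.range := by
    apply mem_of_eq_zero_or_isUnit_leadingCoeff hp <;> rw [Polynomial.aeval_X_left_apply]
    exacts [⟨X 0, aeval_X _ _⟩, ⟨X 1, aeval_X _ _⟩, ⟨X 2, aeval_X _ _⟩]
  rw [← AlgHom.range_eq_top, eq_top_iff, ← Polynomial.adjoin_X]
  exact Algebra.adjoin_le (Set.singleton_subset_iff.mpr hX)

theorem nu_p_closed_embedding_general {R : Type*} [CommRing R] (p : R[X])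
    (hp : p = 0 ∨ IsUnit p.leadingCoeff) :
    let rel : MvPolynomial (Fin 3) R := X 0 * X 1 - X 2 * (X 2 + 1)
    let φ : MvPolynomial (Fin 3) R →ₐ[R] R[X] :=
      aeval ![Polynomial.X * (1 + Polynomial.X * p), p, Polynomial.X * p]
    φ rel = 0 ∧
    ∃ ν : (MvPolynomial (Fin 3) R ⧸ Ideal.span {rel}) →ₐ[R] R[X],
      ν.comp (Ideal.Quotient.mkₐ R (Ideal.span {rel})) = φ ∧ Function.Surjective ν := by
  intro rel φ
  have hrel : φ rel = 0 := by
    simp only [rel, φ, map_sub, map_mul, map_add, map_one, aeval_X, Matrix.cons_val]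
    ring
  have hker : Ideal.span {rel} ≤ RingHom.ker φ := by
    rwa [Ideal.span_singleton_le_iff_mem, RingHom.mem_ker]
  exact ⟨hrel, Ideal.Quotient.liftₐ _ φ hker, Ideal.Quotient.liftₐ_comp _ φ hker,
    Ideal.Quotient.lift_surjective_of_surjective _ hker
      (surjective_aeval_of_eq_zero_or_isUnit_leadingCoeff hp)⟩

/-- **Lemma 2.2(1) (Blanc–van Santen).** For every `p ∈ k[t]`, the assignment
`X ↦ t(1+t·p(t))`, `Y ↦ p(t)`, `Z ↦ t·p(t)` kills the relation `XY − Z(Z+1)`, hence induces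
a `k`-algebra homomorphism `ν_p : A → k[t]`, and `ν_p` is surjective: that is,
`ν_p : 𝔸¹ → Q₂`, `t ↦ (t(1+tp(t)), p(t), tp(t))`, is a closed embedding. -/
theorem nu_p_closed_embedding (k : Type*) [Field k] (p : Polynomial k) :
    nuAux k p (q2Rel k) = 0 ∧
    ∃ ν : Q2Ring k →ₐ[k] Polynomial k,
      ν.comp (Ideal.Quotient.mkₐ k (Ideal.span {q2Rel k})) = nuAux k p ∧
      Function.Surjective ν := by
  have hp : p = 0 ∨ IsUnit p.leadingCoeff :=
    (eq_or_ne p 0).imp_right fun h ↦ (Polynomial.leadingCoeff_ne_zero.mpr h).isUnit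
  exact nu_p_closed_embedding_general p hp
end
end

section
/- Let k be any field, A = k[X,Y,Z]/(XY − Z(Z+1)), and for p ∈ k[t] let ν_p : A → k[t] be the surjective k-algebra homomorphism with X ↦ t(1 + t·p(t)), Y ↦ p(t), Z ↦ t·p(t). Let p, q ∈ k[t] be polynomials of degree ≥ 3 and suppose there exist a k-algebra automorphism α of A and a k-algebra automorphism β of k[t] such that ν_p ∘ α = β ∘ ν_q. Then there exist μ ∈ k and λ ∈ k* such that p(t) = λ·q(λt + μ), β(t) = λt + μ, and α acts on the classes of the generators by X ↦ λX + (μ²/λ)Y + 2μZ + μ, Y ↦ (1/λ)Y, Z ↦ Z + (μ/λ)Y. -/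
open MvPolynomial

noncomputable section

/-- The class of `X` in `A`. -/
def q2X (k : Type*) [Field k] : Q2Ring k := Ideal.Quotient.mk (Ideal.span {q2Rel k}) (X 0)

/-- The class of `Y` in `A`. -/
def q2Y (k : Type*) [Field k] : Q2Ring k := Ideal.Quotient.mk (Ideal.span {q2Rel k}) (X 1)

/-- The class of `Z` in `A`. -/
def q2Z (k : Type*) [Field k] : Q2Ring k := Ideal.Quotient.mk (Ideal.span {q2Rel k}) (X 2)

/-!
Give `X`, `Y`, `Z` the weights `m + 2`, `m`, `m + 1`, where `m = deg p`: these are the degrees of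
their images under `ν_p`, so `deg ν_p(f)` is at most the weighted degree of `f`. Equality holds for
`f = α(X)` and `f = α(Y)`, because `X` and `Y`, hence their images under `α`, are invariant under
nontrivial polynomial flows on `A`. Indeed, carry such a flow along `ν_P` with `P = θ tᵐ`, `θ`
transcendental, and pass to the limit prescribed by the steepest slope of a Newton polygon. The
result is a nonconstant polynomial arc in the flow parameter `s`, lying on the cone `x y = z²`,
starting at `(θ, θ, θ)`, along which the top weight part of `f` is a nonzero constant. Such an arc
is `(u², v², u v)` up to scaling. If the top weight part vanished at `(1, 1, 1)`, then it would be
divisible by `v ^ b - u ^ a`, where `a / b = m / (m + 2)` in lowest terms and `a, b ≥ 2`; this would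
be a unit, forcing `u` and `v` to be constant by the Mason–Stothers theorem, or, if the
characteristic divides `a` or `b`, by differentiating the coefficients.

Comparing degrees in `ν_p ∘ α = β ∘ ν_q` for `(α, β)` and for its inverse gives `deg p = deg q`.
So `α` does not increase the weights of `X`, `Y`, `Z`, which makes it affine in them, and its
coefficients are found by comparing polynomials in `t`.
-/

section Catalan

open scoped Polynomial Differential

lemma exists_derivation_extending {R A B : Type*} [CommRing R] [CommRing A] [CommRing B]
    [Algebra R A] [Algebra R B] [Algebra A B] [IsScalarTower R A B] [Algebra.FormallyEtale A B]
    (d : Derivation R A A) :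
    ∃ D : Derivation R B B, ∀ a, D (algebraMap A B a) = algebraMap A B (d a) :=
  ⟨(((Algebra.linearMap A B ∘ₗ d.liftKaehlerDifferential).liftBaseChange B) ∘ₗ
    (KaehlerDifferential.tensorKaehlerEquivOfFormallyEtale R A B).symm.toLinearMap).compDer
      (KaehlerDifferential.D R B), fun a => by
    simp [KaehlerDifferential.tensorKaehlerEquivOfFormallyEtale_symm_D_algebraMap]⟩

lemma exists_differential_X_eq_one (k K : Type*) [Field k] [Field K] [Algebra k[X] K]
    [IsFractionRing k[X] K] : ∃ _ : Differential K, (algebraMap k[X] K Polynomial.X)′ = 1 := by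
  have := Algebra.FormallyEtale.of_isLocalization (Rₘ := K) (nonZeroDivisors k[X])
  obtain ⟨D, hD⟩ := exists_derivation_extending (B := K)
    ((Polynomial.derivative' (R := k)).restrictScalars ℤ)
  refine ⟨⟨D⟩, (hD Polynomial.X).trans ?_⟩
  simp

variable {K : Type*} [Field K]

lemma natDegree_eq_zero_of_isUnit_pow_sub_pow_of_cast_eq_zero [Differential K]
    {u v : K[X]} {a b : ℕ} (ha : (a : K) = 0) (ha0 : a ≠ 0) (hb : (b : K) ≠ 0) (hb2 : 2 ≤ b)
    (hv : v.coeff 0 ≠ 0) (hv' : (v.coeff 0)′ ≠ 0) (h : IsUnit (v ^ b - u ^ a)) :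
    u.natDegree = 0 ∧ v.natDegree = 0 := by
  obtain ⟨γ, -, hγ⟩ := Polynomial.isUnit_iff.mp h
  have haX : (a : K[X]) = 0 := by rw [← Polynomial.C_eq_natCast, ha, Polynomial.C_0]
  have hder : Polynomial.C γ′ = v ^ (b - 1) * (b * Differential.mapCoeffs v) := by
    have := congrArg Differential.mapCoeffs hγ
    rw [Differential.mapCoeffs_C, map_sub, Derivation.leibniz_pow, Derivation.leibniz_pow] at this
    simp only [this, haX, nsmul_eq_mul, smul_eq_mul, zero_mul, sub_zero]
    ring
  have hγ' : γ′ = v.coeff 0 ^ (b - 1) * (b * (v.coeff 0)′) := by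
    simpa only [map_mul, map_pow, map_natCast, Polynomial.constantCoeff_apply,
      Polynomial.coeff_C_zero, Differential.coeff_mapCoeffs]
      using congrArg Polynomial.constantCoeff hder
  have hvu : IsUnit v := by
    have : IsUnit (Polynomial.C γ′) := Polynomial.isUnit_C.mpr <| isUnit_iff_ne_zero.mpr <| by
      rw [hγ']; positivity
    rw [hder] at this
    exact (isUnit_pow_iff (by omega)).mp (isUnit_of_mul_isUnit_left this)
  have hv0 := Polynomial.natDegree_eq_zero_of_isUnit hvu
  refine ⟨?_, hv0⟩
  have hu : u ^ a = Polynomial.C (v.coeff 0 ^ b - γ) := by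
    rw [Polynomial.C_sub, Polynomial.C_pow, ← Polynomial.eq_C_of_natDegree_eq_zero hv0, hγ]; ring
  have := congrArg Polynomial.natDegree hu
  rw [Polynomial.natDegree_pow, Polynomial.natDegree_C] at this
  exact (Nat.mul_eq_zero.mp this).resolve_left ha0

lemma natDegree_eq_zero_of_isUnit_pow_sub_pow [Differential K] {u v : K[X]} {a b : ℕ}
    (hab : a.Coprime b) (ha : 2 ≤ a) (hb : 2 ≤ b) (huv : u.coeff 0 = v.coeff 0)
    (hv : v.coeff 0 ≠ 0) (hv' : (v.coeff 0)′ ≠ 0) (h : IsUnit (v ^ b - u ^ a)) :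
    u.natDegree = 0 ∧ v.natDegree = 0 := by
  by_cases haK : (a : K) = 0 <;> by_cases hbK : (b : K) = 0
  · have := (Nat.isCoprime_iff_coprime.mpr hab).intCast (R := K)
    simp [haK, hbK] at this
  · exact natDegree_eq_zero_of_isUnit_pow_sub_pow_of_cast_eq_zero haK (by omega) hbK hb hv hv' h
  · rw [IsUnit.sub_iff] at h
    exact (natDegree_eq_zero_of_isUnit_pow_sub_pow_of_cast_eq_zero hbK (by omega) haK ha
      (huv ▸ hv) (huv ▸ hv') h).symm
  · obtain ⟨γ, hγ, hγ'⟩ := Polynomial.isUnit_iff.mp h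
    have hcop : IsCoprime v u := by
      refine (IsCoprime.pow_iff (m := b) (n := a) (by omega) (by omega)).mp ?_
      obtain ⟨e, he⟩ := h.exists_left_inv
      exact ⟨e, -e, by linear_combination he⟩
    have hne {f : K[X]} (hf : f.coeff 0 ≠ 0) : f ≠ 0 := by rintro rfl; simp at hf
    have hsum : b * a ≥ a + b + 1 := by
      have : a ≠ b := by rintro rfl; rw [Nat.coprime_self] at hab; omega
      rcases Nat.lt_or_gt_of_ne this with h | h <;> nlinarith
    have := Polynomial.flt_catalan (k := K) (p := b) (q := a) (r := b * a) (by omega) (by omega)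
      (by positivity) (by nlinarith) hbK haK (by push_cast; exact mul_ne_zero hbK haK)
      (hne hv) (hne (huv ▸ hv)) one_ne_zero hcop one_ne_zero (neg_ne_zero.mpr one_ne_zero)
      (neg_ne_zero.mpr hγ.ne_zero) (by simp [hγ', sub_eq_add_neg])
    exact ⟨this.2.1, this.1⟩

lemma pow_sub_pow_dvd_of_weight_eq {R : Type*} [CommRing R] (u v : R) {a b i j i' j' : ℕ}
    (hab : a.Coprime b) (ha : 0 < a) (h : b * i + a * j = b * i' + a * j') :
    v ^ b - u ^ a ∣ u ^ i * v ^ j - u ^ i' * v ^ j' := by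
  wlog hii : i' ≤ i generalizing i i' j j'
  · rw [dvd_sub_comm]
    exact this h.symm (by omega)
  obtain ⟨d, rfl⟩ := Nat.exists_eq_add_of_le hii
  obtain ⟨n, rfl⟩ : a ∣ d := hab.dvd_of_dvd_mul_left ⟨j' - j, by
    rw [Nat.mul_sub, mul_add] at *; omega⟩
  obtain rfl : j' = j + b * n := Nat.eq_of_mul_eq_mul_left ha (by linear_combination -h)
  have : u ^ (i' + a * n) * v ^ j - u ^ i' * v ^ (j + b * n)
      = -(u ^ i' * v ^ j * ((v ^ b) ^ n - (u ^ a) ^ n)) := by ring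
  rw [this, dvd_neg]
  exact (sub_dvd_pow_sub_pow _ _ n).mul_left _

lemma pow_sub_pow_dvd_sum_of_sum_eq_zero {R ι : Type*} [CommRing R] (u v : R) {a b W : ℕ}
    (hab : a.Coprime b) (ha : 0 < a) {s : Finset ι} {c : ι → R} {i j : ι → ℕ}
    (hW : ∀ M ∈ s, b * i M + a * j M = W) (hc : ∑ M ∈ s, c M = 0) :
    v ^ b - u ^ a ∣ ∑ M ∈ s, c M * (u ^ i M * v ^ j M) := by
  rcases s.eq_empty_or_nonempty with rfl | ⟨N, hN⟩
  · simp
  have : ∑ M ∈ s, c M * (u ^ i M * v ^ j M)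
      = ∑ M ∈ s, c M * (u ^ i M * v ^ j M - u ^ i N * v ^ j N) := by
    simp only [mul_sub, Finset.sum_sub_distrib, ← Finset.sum_mul, hc, zero_mul, sub_zero]
  rw [this]
  exact Finset.dvd_sum fun M hM =>
    (pow_sub_pow_dvd_of_weight_eq u v hab ha ((hW M hM).trans (hW N hN).symm)).mul_left _

lemma exists_sq_eq_of_mul_eq_sq {x y z : K[X]} (hxy : IsCoprime x y) (h : x * y = z ^ 2) {w : K}
    (hw : w ≠ 0) (hx : x.coeff 0 = w ^ 2) : ∃ u : K[X], u ^ 2 = x ∧ u.coeff 0 = w := by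
  obtain ⟨r, e, hr⟩ := exists_associated_pow_of_mul_eq_pow' hxy h
  obtain ⟨c, -, hc⟩ := Polynomial.isUnit_iff.mp e.isUnit
  have h0 : r.coeff 0 ^ 2 * c = w ^ 2 := by
    rw [← hx, ← hr, ← hc]
    simp [Polynomial.coeff_zero_eq_eval_zero]
  have hr0 : r.coeff 0 ≠ 0 := by
    intro h1
    exact hw (pow_eq_zero_iff two_ne_zero |>.mp (by rw [← h0, h1]; ring))
  refine ⟨Polynomial.C (w / r.coeff 0) * r, ?_, ?_⟩
  · rw [mul_pow, ← hr, ← hc, ← Polynomial.C_pow, mul_comm, div_pow, ← h0,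
      mul_div_cancel_left₀ _ (pow_ne_zero 2 hr0)]
  · rw [Polynomial.coeff_C_mul, div_mul_cancel₀ _ hr0]

lemma exists_sq_mul_sq_of_mul_eq_sq {x y z : K[X]} (hxy : IsCoprime x y) (h : x * y = z ^ 2)
    {w : K} (hw : w ≠ 0) (hx : x.coeff 0 = w ^ 2) (hy : y.coeff 0 = w ^ 2)
    (hz : z.coeff 0 = w ^ 2) :
    ∃ u v : K[X], x = u ^ 2 ∧ y = v ^ 2 ∧ z = u * v ∧ u.coeff 0 = w ∧ v.coeff 0 = w := by
  obtain ⟨u, rfl, hu⟩ := exists_sq_eq_of_mul_eq_sq hxy h hw hx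
  obtain ⟨v, rfl, hv⟩ := exists_sq_eq_of_mul_eq_sq hxy.symm ((mul_comm _ _).trans h) hw hy
  refine ⟨u, v, rfl, rfl, ?_, hu, hv⟩
  rcases sq_eq_sq_iff_eq_or_eq_neg.mp (show z ^ 2 = (u * v) ^ 2 by rw [← h]; ring) with h1 | h1
  · exact h1
  · have h2 : (2 : K) * w ^ 2 = 0 := by
      have := congrArg (Polynomial.coeff · 0) h1
      simp only [Polynomial.coeff_neg, Polynomial.mul_coeff_zero, hz, hu, hv] at this
      linear_combination this
    have h3 : (2 : K[X]) = 0 := by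
      rw [← Polynomial.C_ofNat, (mul_eq_zero.mp h2).resolve_right (pow_ne_zero 2 hw),
        Polynomial.C_0]
    linear_combination h1 - u * v * h3

lemma isCoprime_of_isUnit_sum {ι : Type*} {x y z : K[X]} (hxy : x ≠ 0 ∨ y ≠ 0)
    (h : x * y = z ^ 2) {s : Finset ι} {c : ι → K[X]} {i j e : ι → ℕ}
    (hs : ∀ M ∈ s, i M ≠ 0 ∨ j M ≠ 0 ∨ e M ≠ 0)
    (hunit : IsUnit (∑ M ∈ s, c M * (x ^ i M * y ^ j M * z ^ e M))) : IsCoprime x y := by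
  refine isCoprime_of_prime_dvd (by tauto) fun π hπ hx hy => hπ.not_isUnit ?_
  have hz : π ∣ z := hπ.dvd_of_dvd_pow (h ▸ hx.mul_right y)
  refine isUnit_of_dvd_unit (Finset.dvd_sum fun M hM => Dvd.dvd.mul_left ?_ _) hunit
  rcases hs M hM with h1 | h1 | h1
  · exact ((dvd_pow hx h1).mul_right _).mul_right _
  · exact ((dvd_pow hy h1).mul_left _).mul_right _
  · exact (dvd_pow hz h1).mul_left _

lemma exists_coprime_mul_eq_add_two {m : ℕ} (hm : 3 ≤ m) : ∃ a b g : ℕ, a.Coprime b ∧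
    2 ≤ a ∧ 2 ≤ b ∧ 0 < g ∧ m = a * g ∧ m + 2 = b * g := by
  obtain ⟨a, b, hab, ha, hb⟩ := Nat.exists_coprime m (m + 2)
  have hg : m.gcd (m + 2) ∣ 2 := (Nat.dvd_add_right (m.gcd_dvd_left _)).mp (m.gcd_dvd_right _)
  have hg2 : m.gcd (m + 2) ≤ 2 := Nat.le_of_dvd two_pos hg
  exact ⟨a, b, m.gcd (m + 2), hab, by nlinarith, by nlinarith,
    Nat.gcd_pos_of_pos_left _ (by omega), ha, hb⟩

theorem natDegree_eq_zero_of_isUnit_weighted_sum [Differential K] {ι : Type*} {x y z : K[X]}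
    {w : K} (hw : w ≠ 0) (hw' : w′ ≠ 0) (hx : x.coeff 0 = w ^ 2) (hy : y.coeff 0 = w ^ 2)
    (hz : z.coeff 0 = w ^ 2) (h : x * y = z ^ 2) {m W : ℕ} (hm : 3 ≤ m) (hW : W ≠ 0)
    {s : Finset ι} {c : ι → K} {i j e : ι → ℕ}
    (hs : ∀ M ∈ s, (m + 2) * i M + m * j M + (m + 1) * e M = W) (hc : ∑ M ∈ s, c M = 0)
    (hunit : IsUnit (∑ M ∈ s, Polynomial.C (c M) * (x ^ i M * y ^ j M * z ^ e M))) :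
    x.natDegree = 0 ∧ y.natDegree = 0 ∧ z.natDegree = 0 := by
  have hcop : IsCoprime x y := by
    refine isCoprime_of_isUnit_sum (.inl ?_) h (fun M hM => ?_) hunit
    · rintro rfl
      exact hw (by simpa using hx.symm)
    · by_contra! h0
      exact hW (by rw [← hs M hM, h0.1, h0.2.1, h0.2.2]; simp)
  obtain ⟨u, v, rfl, rfl, rfl, hu, hv⟩ := exists_sq_mul_sq_of_mul_eq_sq hcop h hw hx hy hz
  obtain ⟨a, b, g, hab, ha2, hb2, hg, ha, hb⟩ := exists_coprime_mul_eq_add_two hm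
  have hweight : ∀ M ∈ s, b * (2 * i M + e M) + a * (2 * j M + e M) = 2 * W / g := by
    intro M hM
    refine (Nat.div_eq_of_eq_mul_left hg ?_).symm
    rw [← hs M hM]
    linear_combination (2 * i M + e M) * hb + (2 * j M + e M) * ha
  have hdvd := pow_sub_pow_dvd_sum_of_sum_eq_zero u v hab (by omega) hweight
    (c := fun M => Polynomial.C (c M)) (by rw [← map_sum, hc, Polynomial.C_0])
  have hunit' : IsUnit (v ^ b - u ^ a) := by
    refine isUnit_of_dvd_unit hdvd ?_
    convert! hunit using 3
    ring
  obtain ⟨hu0, hv0⟩ := natDegree_eq_zero_of_isUnit_pow_sub_pow hab ha2 hb2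
    (hu.trans hv.symm) (hv ▸ hw) (hv ▸ hw') hunit'
  have huv : (u * v).natDegree ≤ 0 := Polynomial.natDegree_mul_le.trans_eq (by rw [hu0, hv0])
  exact ⟨by simp [hu0], by simp [hv0], Nat.le_zero.mp huv⟩

end Catalan

section TopCoeff

open scoped Polynomial

variable {R Γ : Type*}

/-- `f` has degree at most `d`, and `r` is its coefficient in degree `d` (possibly zero). -/
def HasTopCoeff [Semiring R] [LinearOrder Γ] (f : AddMonoidAlgebra R Γ) (d : Γ) (r : R) : Prop :=
  f.supDegree (WithBot.some : Γ → WithBot Γ) ≤ d ∧ f.coeff d = r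

namespace HasTopCoeff

section Semiring

variable [Semiring R] [LinearOrder Γ] {f g : AddMonoidAlgebra R Γ} {d e : Γ} {r r' : R}

lemma eq (hf : HasTopCoeff f d r) (hf' : HasTopCoeff f d r') : r = r' :=
  hf.2.symm.trans hf'.2

lemma of_lt (hf : HasTopCoeff f d r) (hde : d < e) : HasTopCoeff f e 0 :=
  ⟨hf.1.trans (WithBot.coe_le_coe.mpr hde.le), AddMonoidAlgebra.coeff_eq_zero_of_not_le_supDegree
    (not_le.mpr (hf.1.trans_lt (WithBot.coe_lt_coe.mpr hde)))⟩

lemma single (d : Γ) (r : R) : HasTopCoeff (AddMonoidAlgebra.single d r) d r := by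
  classical
  refine ⟨?_, by simp⟩
  rw [AddMonoidAlgebra.supDegree_single]
  split_ifs
  exacts [bot_le, le_rfl]

lemma add (hf : HasTopCoeff f d r) (hg : HasTopCoeff g d r') : HasTopCoeff (f + g) d (r + r') :=
  ⟨AddMonoidAlgebra.supDegree_add_le.trans (sup_le hf.1 hg.1), by
    simp [hf.2, hg.2]⟩

lemma zero (d : Γ) : HasTopCoeff (0 : AddMonoidAlgebra R Γ) d 0 := by
  simp [HasTopCoeff]

lemma sum {ι : Type*} {s : Finset ι} {f : ι → AddMonoidAlgebra R Γ} {r : ι → R}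
    (h : ∀ i ∈ s, HasTopCoeff (f i) d (r i)) : HasTopCoeff (∑ i ∈ s, f i) d (∑ i ∈ s, r i) := by
  classical
  induction s using Finset.induction_on with
  | empty => simpa using zero d
  | insert i s hi ih =>
    rw [Finset.sum_insert hi, Finset.sum_insert hi]
    exact (h i (by simp)).add (ih fun j hj => h j (by simp [hj]))

lemma smul {S : Type*} [SMulZeroClass S R] (c : S) (hf : HasTopCoeff f d r) :
    HasTopCoeff (c • f) d (c • r) :=
  ⟨(Finset.sup_mono Finsupp.support_smul).trans hf.1, by simp [hf.2]⟩

lemma le_of_mem_support (hf : HasTopCoeff f d r) {a : Γ} (ha : a ∈ f.coeff.support) : a ≤ d :=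
  WithBot.coe_le_coe.mp ((Finset.le_sup (f := (WithBot.some : Γ → WithBot Γ)) ha).trans hf.1)

variable [AddCommMonoid Γ]

lemma one : HasTopCoeff (1 : AddMonoidAlgebra R Γ) 0 1 :=
  single 0 1

variable [IsOrderedCancelAddMonoid Γ]

lemma mul (hf : HasTopCoeff f d r) (hg : HasTopCoeff g e r') :
    HasTopCoeff (f * g) (d + e) (r * r') := by
  refine ⟨(AddMonoidAlgebra.supDegree_mul_le WithBot.coe_add).trans ?_, ?_⟩
  · rw [WithBot.coe_add]
    exact add_le_add hf.1 hg.1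
  · rw [← hf.2, ← hg.2]
    refine AddMonoidAlgebra.coeff_mul_add_of_uniqueAdd fun a b ha hb hab => ?_
    exact (add_eq_add_iff_eq_and_eq (hf.le_of_mem_support ha) (hg.le_of_mem_support hb)).mp hab

lemma pow (hf : HasTopCoeff f d r) (n : ℕ) : HasTopCoeff (f ^ n) (n • d) (r ^ n) := by
  induction n with
  | zero => simpa using one
  | succ n ih => simpa only [pow_succ, succ_nsmul] using ih.mul hf

end Semiring

end HasTopCoeff

lemma hasTopCoeff_toFinsuppIso_iff [CommSemiring R] {p : R[X]} {d : ℕ} {r : R} :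
    HasTopCoeff (Polynomial.toFinsuppIsoAlg R p) d r ↔ p.natDegree ≤ d ∧ p.coeff d = r := by
  refine and_congr ?_ ?_
  · rw [Polynomial.natDegree_le_iff_degree_le]
    exact Iff.rfl
  · rfl

end TopCoeff

section NewtonPolygon

open scoped Polynomial

variable {R : Type*} [CommSemiring R]

/-- The substitution `(s, t) ↦ (s t ^ (-κ), t)` into polynomials in `s` over `R[t]`, with `κ`
rational; the target is regarded as an algebra of polynomials in fractional powers of `t`
over `R[s]`. -/
def slopeSubst (κ : ℚ) : R[X][X] →ₐ[R] AddMonoidAlgebra R[X] ℚ :=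
  Polynomial.eval₂AlgHom (Polynomial.aeval (AddMonoidAlgebra.single 1 1))
    (AddMonoidAlgebra.single (-κ) Polynomial.X) fun _ => Commute.all _ _

/-- The polynomial carried by the edge of slope `κ` of the Newton polygon of `P ∈ R[t][s]`: the
sum of the terms `c sⁱ tʲ` of `P` with `j = d + κ i`, at `t = 1`. It is meant for a line
`j = d + κ i` lying above the polygon, so that only the leading coefficients in `t` matter. -/
def edgePolynomial (κ d : ℚ) (P : R[X][X]) : R[X] :=
  P.sum fun i a => Polynomial.monomial i
    (if (a.natDegree : ℚ) = d + κ * i then a.leadingCoeff else 0)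

lemma coeff_edgePolynomial (κ d : ℚ) (P : R[X][X]) (i : ℕ) :
    (edgePolynomial κ d P).coeff i
      = if ((P.coeff i).natDegree : ℚ) = d + κ * i then (P.coeff i).leadingCoeff else 0 := by
  rw [edgePolynomial, Polynomial.sum_def, Polynomial.finsetSum_coeff]
  simp only [Polynomial.coeff_monomial, Finset.sum_ite_eq', Polynomial.mem_support_iff]
  split_ifs <;> simp_all

lemma coeff_zero_edgePolynomial (κ : ℚ) {d : ℕ} {P : R[X][X]} (h : (P.coeff 0).natDegree ≤ d) :
    (edgePolynomial κ d P).coeff 0 = (P.coeff 0).coeff d := by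
  simp only [coeff_edgePolynomial, Nat.cast_zero, mul_zero, add_zero, Nat.cast_inj]
  split_ifs with hd
  · rw [← hd, Polynomial.leadingCoeff]
  · exact (Polynomial.coeff_eq_zero_of_natDegree_lt (lt_of_le_of_ne h hd)).symm

lemma hasTopCoeff_aeval_single {q : R[X]} {d : ℕ} (hq : q.natDegree ≤ d) :
    HasTopCoeff (Polynomial.aeval (AddMonoidAlgebra.single 1 1 : AddMonoidAlgebra R[X] ℚ) q)
      (d : ℚ) (Polynomial.C (q.coeff d)) := by
  have hterm (n : ℕ) : q.coeff n • (AddMonoidAlgebra.single 1 1 : AddMonoidAlgebra R[X] ℚ) ^ n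
      = AddMonoidAlgebra.single (n : ℚ) (Polynomial.C (q.coeff n)) := by
    simp [AddMonoidAlgebra.single_pow, AddMonoidAlgebra.smul_single, Polynomial.smul_eq_C_mul]
  rw [Polynomial.aeval_eq_sum_range' (Nat.lt_succ_of_le hq), Finset.sum_range_succ,
    ← zero_add (Polynomial.C _), hterm]
  refine .add ?_ (.single _ _)
  rw [← Finset.sum_const_zero (s := Finset.range d)]
  refine .sum fun n hn => ?_
  rw [hterm]
  exact (HasTopCoeff.single _ _).of_lt (by exact_mod_cast Finset.mem_range.mp hn)

lemma slopeSubst_C (κ : ℚ) (q : R[X]) : slopeSubst κ (Polynomial.C q)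
    = Polynomial.aeval (AddMonoidAlgebra.single 1 1 : AddMonoidAlgebra R[X] ℚ) q := by
  simp [slopeSubst]

lemma hasTopCoeff_slopeSubst {κ d : ℚ} {P : R[X][X]}
    (h : ∀ i ∈ P.support, ((P.coeff i).natDegree : ℚ) ≤ d + κ * i) :
    HasTopCoeff (slopeSubst κ P) d (edgePolynomial κ d P) := by
  conv => enter [1]; rw [P.as_sum_support]
  rw [map_sum]
  refine .sum fun i hi => ?_
  have hmul := (hasTopCoeff_aeval_single (P.coeff i).natDegree.le_refl).mul
    ((HasTopCoeff.single (-κ) (Polynomial.X : R[X])).pow i)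
  have : slopeSubst κ (Polynomial.monomial i (P.coeff i)) = Polynomial.aeval
      (AddMonoidAlgebra.single 1 1 : AddMonoidAlgebra R[X] ℚ) (P.coeff i)
        * AddMonoidAlgebra.single (-κ) Polynomial.X ^ i := by
    simp [slopeSubst, -AddMonoidAlgebra.single_pow]
  rw [this]
  have hdeg : ((P.coeff i).natDegree : ℚ) + i • -κ = (P.coeff i).natDegree - κ * i := by
    simp; ring
  rw [Polynomial.coeff_natDegree, Polynomial.C_mul_X_pow_eq_monomial, hdeg] at hmul
  dsimp only
  split_ifs with heq
  · rwa [heq, add_sub_cancel_right] at hmul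
  · rw [Polynomial.monomial_zero_right]
    exact hmul.of_lt (by linarith [lt_of_le_of_ne (h i hi) heq])

lemma exists_slope {ι : Type*} [Finite ι] {P : ι → R[X][X]} {d : ι → ℚ}
    (h0 : ∀ g, (((P g).coeff 0).natDegree : ℚ) ≤ d g) (hP : ∃ g, (P g).natDegree ≠ 0) :
    ∃ κ : ℚ, (∀ g, HasTopCoeff (slopeSubst κ (P g)) (d g) (edgePolynomial κ (d g) (P g))) ∧
      ∃ g, (edgePolynomial κ (d g) (P g)).natDegree ≠ 0 := by
  classical
  have := Fintype.ofFinite ι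
  let T : Finset (Σ _ : ι, ℕ) := Finset.univ.sigma fun g => (P g).support.erase 0
  have hT : T.Nonempty := by
    obtain ⟨g, hg⟩ := hP
    exact ⟨⟨g, (P g).natDegree⟩, by
      simpa [T, hg] using Polynomial.ne_zero_of_natDegree_gt (Nat.pos_of_ne_zero hg)⟩
  let slope (x : Σ _ : ι, ℕ) : ℚ := (((P x.1).coeff x.2).natDegree - d x.1) / x.2
  obtain ⟨⟨g, n⟩, hg, hmax⟩ := T.exists_max_image slope hT
  simp only [T, Finset.mem_sigma, Finset.mem_univ, true_and, Finset.mem_erase] at hg hmax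
  have hn : (n : ℚ) ≠ 0 := by exact_mod_cast hg.1
  refine ⟨slope ⟨g, n⟩, fun g' => hasTopCoeff_slopeSubst fun i hi => ?_, g, fun hdeg => ?_⟩
  · rcases eq_or_ne i 0 with rfl | hi0
    · simpa using h0 g'
    · have := hmax ⟨g', i⟩ ⟨hi0, hi⟩
      rw [div_le_iff₀ (by positivity)] at this
      linarith
  · have hcoeff : (edgePolynomial (slope ⟨g, n⟩) (d g) (P g)).coeff n ≠ 0 := by
      rw [coeff_edgePolynomial, if_pos (by simp only [slope]; field_simp; ring)]
      simpa using hg.2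
    exact hg.1 (by have := Polynomial.le_natDegree_of_ne_zero hcoeff; omega)

end NewtonPolygon

namespace Q2Ring

open scoped Polynomial

section Presentation

variable {k : Type*} [Field k]

lemma q2X_mul_q2Y : q2X k * q2Y k = q2Z k * (q2Z k + 1) :=
  (Ideal.Quotient.mk_eq_mk_iff_sub_mem _ _).mpr (Ideal.subset_span rfl)

variable {B : Type*} [CommRing B] [Algebra k B]

/-- The universal property of `A`: the `k`-algebra homomorphism `X ↦ x`, `Y ↦ y`, `Z ↦ z`
attached to a point `(x, y, z)` of the quadric with coordinates in `B`. -/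
def lift (x y z : B) (h : x * y = z * (z + 1)) : Q2Ring k →ₐ[k] B :=
  Ideal.Quotient.liftₐ (Ideal.span {q2Rel k}) (MvPolynomial.aeval ![x, y, z]) fun a ha => by
    have : Ideal.span {q2Rel k} ≤ RingHom.ker (MvPolynomial.aeval (R := k) ![x, y, z]) := by
      simp [Ideal.span_le, q2Rel, RingHom.mem_ker, h]
    exact this ha

section lift

variable (x y z : B) (h : x * y = z * (z + 1))

@[simp] lemma lift_q2X : lift (k := k) x y z h (q2X k) = x :=
  (Ideal.Quotient.liftₐ_apply _ _ _ _).trans <| (Ideal.Quotient.lift_mk _ _ _).trans <| by simp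

@[simp] lemma lift_q2Y : lift (k := k) x y z h (q2Y k) = y :=
  (Ideal.Quotient.liftₐ_apply _ _ _ _).trans <| (Ideal.Quotient.lift_mk _ _ _).trans <| by simp

@[simp] lemma lift_q2Z : lift (k := k) x y z h (q2Z k) = z :=
  (Ideal.Quotient.liftₐ_apply _ _ _ _).trans <| (Ideal.Quotient.lift_mk _ _ _).trans <| by simp

end lift

lemma algHom_ext {f g : Q2Ring k →ₐ[k] B} (hX : f (q2X k) = g (q2X k))
    (hY : f (q2Y k) = g (q2Y k)) (hZ : f (q2Z k) = g (q2Z k)) : f = g :=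
  Ideal.Quotient.algHom_ext _ <| MvPolynomial.algHom_ext fun i => by
    fin_cases i
    exacts [hX, hY, hZ]

end Presentation

section NormalForm

variable {k : Type*} [Field k]

/-- The monomial `Xⁱ Yʲ Zᵉ` with `e ≤ 1`, for `M = (i, j, e)`: these span `A` because
`Z² = X Y - Z`. -/
def normalMonomial (k : Type*) [Field k] (M : ℕ × ℕ × Fin 2) : Q2Ring k :=
  q2X k ^ M.1 * q2Y k ^ M.2.1 * q2Z k ^ (M.2.2 : ℕ)

/-- The weight of `Xⁱ Yʲ Zᵉ`, for `M = (i, j, e)`, when `X`, `Y`, `Z` have weights `m + 2`, `m`,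
`m + 1`, the degrees of their images under `ν_p` for `p` of degree `m`. -/
def weight (m : ℕ) (M : ℕ × ℕ × Fin 2) : ℕ :=
  (m + 2) * M.1 + m * M.2.1 + (m + 1) * M.2.2

lemma normalMonomial_mem_span (M : ℕ × ℕ × Fin 2) :
    normalMonomial k M ∈ Submodule.span k (Set.range (normalMonomial k)) :=
  Submodule.subset_span ⟨M, rfl⟩

lemma monomial_mem_span (i j e : ℕ) : q2X k ^ i * q2Y k ^ j * q2Z k ^ e ∈
    Submodule.span k (Set.range (normalMonomial k)) := by
  induction e using Nat.twoStepInduction generalizing i j with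
  | zero => exact normalMonomial_mem_span (i, j, 0)
  | one => exact normalMonomial_mem_span (i, j, 1)
  | more e ih ih' =>
    convert! sub_mem (ih (i + 1) (j + 1)) (ih' i j) using 1
    linear_combination (-(q2X k ^ i * q2Y k ^ j * q2Z k ^ e)) * q2X_mul_q2Y (k := k)

lemma linearCombination_normalMonomial_surjective :
    Function.Surjective (Finsupp.linearCombination k (normalMonomial k)) := by
  rw [← LinearMap.range_eq_top, Finsupp.range_linearCombination, eq_top_iff]
  rintro a -
  obtain ⟨P, rfl⟩ := Ideal.Quotient.mk_surjective a
  induction P using MvPolynomial.induction_on' with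
  | monomial u c =>
    convert! Submodule.smul_mem _ c (monomial_mem_span (k := k) (u 0) (u 1) (u 2)) using 1
    rw [MvPolynomial.monomial_eq, Finsupp.prod_fintype _ _ (by simp), Fin.prod_univ_three,
      ← MvPolynomial.smul_eq_C_mul]
    rfl
  | add P Q hP hQ => simpa only [map_add] using add_mem hP hQ

lemma eq_of_weight_eq {m : ℕ} {M N : ℕ × ℕ × Fin 2} (hw : weight m M = weight m N)
    (hd : M.1 + M.2.1 + M.2.2 = N.1 + N.2.1 + N.2.2) : M = N := by
  obtain ⟨i, j, e⟩ := M
  obtain ⟨i', j', e'⟩ := N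
  simp only [weight] at hw hd
  have : 2 * i + e = 2 * i' + e' := by linear_combination hw - m * hd
  simp only [Prod.mk.injEq, Fin.ext_iff]
  omega

end NormalForm

section WeightPart

variable {k B : Type*} [Field k] [CommRing B] [Algebra k B]

/-- The value at `(x, y, z)` of the part of weight `W` of the normal form with coefficients `c`. -/
def weightPart (m W : ℕ) (c : ℕ × ℕ × Fin 2 →₀ k) (x y z : B) : B :=
  ∑ M ∈ c.support with weight m M = W, c M • (x ^ M.1 * y ^ M.2.1 * z ^ (M.2.2 : ℕ))

lemma map_weightPart {B' : Type*} [CommRing B'] [Algebra k B'] (g : B →ₐ[k] B') (m W : ℕ)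
    (c : ℕ × ℕ × Fin 2 →₀ k) (x y z : B) :
    g (weightPart m W c x y z) = weightPart m W c (g x) (g y) (g z) := by
  simp only [weightPart, map_sum, map_smul, map_mul, map_pow]

lemma weightPart_ne_zero {m W : ℕ} {c : ℕ × ℕ × Fin 2 →₀ k} (hc : ∃ M ∈ c.support, weight m M = W)
    {θ : B} (hθ : Transcendental k θ) : weightPart m W c θ θ θ ≠ 0 := by
  obtain ⟨N, hN, hNW⟩ := hc
  let g : k[X] := ∑ M ∈ c.support with weight m M = W,
    Polynomial.monomial (M.1 + M.2.1 + M.2.2) (c M)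
  have hg : Polynomial.aeval θ g = weightPart m W c θ θ θ := by
    simp only [g, weightPart, map_sum, Polynomial.aeval_monomial, Algebra.smul_def, pow_add]
  have hcoeff : g.coeff (N.1 + N.2.1 + N.2.2) = c N := by
    simp only [g, Polynomial.finsetSum_coeff, Polynomial.coeff_monomial]
    rw [Finset.sum_eq_single_of_mem N (by simp_all), if_pos rfl]
    exact fun M hM hMN => if_neg fun hd => hMN <|
      eq_of_weight_eq ((Finset.mem_filter.mp hM).2.trans hNW.symm) hd
  intro h
  rw [transcendental_iff.mp hθ g (hg.trans h), Polynomial.coeff_zero] at hcoeff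
  exact Finsupp.mem_support_iff.mp hN hcoeff.symm

variable {Γ : Type*} [Semiring Γ] [LinearOrder Γ] [IsStrictOrderedRing Γ]
  {f : Q2Ring k →ₐ[k] AddMonoidAlgebra B Γ} {m : ℕ} {x y z : B}

lemma mul_eq_sq_of_hasTopCoeff (hX : HasTopCoeff (f (q2X k)) ((m + 2 : ℕ) : Γ) x)
    (hY : HasTopCoeff (f (q2Y k)) (m : Γ) y) (hZ : HasTopCoeff (f (q2Z k)) ((m + 1 : ℕ) : Γ) z) :
    x * y = z ^ 2 := by
  have hpos : (0 : Γ) < ((m + 1 : ℕ) : Γ) := by exact_mod_cast m.succ_pos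
  have hXY := hX.mul hY
  have hZZ := hZ.mul (hZ.add (HasTopCoeff.one.of_lt hpos))
  rw [← map_mul, q2X_mul_q2Y, ← Nat.cast_add] at hXY
  rw [← map_one f, ← map_add, ← map_mul, ← Nat.cast_add, add_zero] at hZZ
  rw [show m + 2 + m = m + 1 + (m + 1) by ring] at hXY
  exact (hXY.eq hZZ).trans (sq z).symm

lemma hasTopCoeff_linearCombination (hX : HasTopCoeff (f (q2X k)) ((m + 2 : ℕ) : Γ) x)
    (hY : HasTopCoeff (f (q2Y k)) (m : Γ) y) (hZ : HasTopCoeff (f (q2Z k)) ((m + 1 : ℕ) : Γ) z)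
    {W : ℕ} {c : ℕ × ℕ × Fin 2 →₀ k} (hc : ∀ M ∈ c.support, weight m M ≤ W) :
    HasTopCoeff (f (Finsupp.linearCombination k (normalMonomial k) c)) (W : Γ)
      (weightPart m W c x y z) := by
  rw [Finsupp.linearCombination_apply, Finsupp.sum, map_sum, weightPart, Finset.sum_filter]
  refine .sum fun M hM => ?_
  have hmon : HasTopCoeff (f (normalMonomial k M)) (weight m M : Γ)
      (x ^ M.1 * y ^ M.2.1 * z ^ (M.2.2 : ℕ)) := by
    convert! ((hX.pow M.1).mul (hY.pow M.2.1)).mul (hZ.pow M.2.2) using 1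
    · simp only [normalMonomial, map_mul, map_pow]
    · simp only [weight, nsmul_eq_mul, ← Nat.cast_mul, ← Nat.cast_add, mul_comm]
  rw [map_smul]
  split_ifs with h
  · exact h ▸ hmon.smul (c M)
  · rw [← smul_zero (c M)]
    exact (hmon.of_lt (Nat.cast_lt.mpr (lt_of_le_of_ne (hc M hM) h))).smul (c M)

end WeightPart

section Nu

variable {k B : Type*} [Field k] [CommRing B] [Algebra k B]

/-- The homomorphism `ν_P` for a polynomial `P` with coefficients in a `k`-algebra `B`. -/
def nu (P : B[X]) : Q2Ring k →ₐ[k] B[X] :=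
  lift (Polynomial.X * (1 + Polynomial.X * P)) P (Polynomial.X * P) (by ring)

@[simp] lemma nu_q2X (P : B[X]) :
    nu (k := k) P (q2X k) = Polynomial.X * (1 + Polynomial.X * P) := lift_q2X ..

@[simp] lemma nu_q2Y (P : B[X]) : nu (k := k) P (q2Y k) = P := lift_q2Y ..

@[simp] lemma nu_q2Z (P : B[X]) : nu (k := k) P (q2Z k) = Polynomial.X * P := lift_q2Z ..

variable {P : B[X]} {m : ℕ} {θ : B}

lemma natDegree_nu_q2X_le (hP : P.natDegree ≤ m) : (nu (k := k) P (q2X k)).natDegree ≤ m + 2 := by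
  rw [nu_q2X]
  compute_degree
  omega

lemma coeff_nu_q2X (hm : P.coeff m = θ) : (nu (k := k) P (q2X k)).coeff (m + 2) = θ := by
  rw [nu_q2X, Polynomial.coeff_X_mul, Polynomial.coeff_add, Polynomial.coeff_X_mul, hm,
    Polynomial.coeff_one, if_neg m.succ_ne_zero, zero_add]

lemma natDegree_nu_q2Y_le (hP : P.natDegree ≤ m) : (nu (k := k) P (q2Y k)).natDegree ≤ m := by
  rwa [nu_q2Y]

lemma coeff_nu_q2Y (hm : P.coeff m = θ) : (nu (k := k) P (q2Y k)).coeff m = θ := by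
  rwa [nu_q2Y]

lemma natDegree_nu_q2Z_le (hP : P.natDegree ≤ m) : (nu (k := k) P (q2Z k)).natDegree ≤ m + 1 := by
  rw [nu_q2Z]
  compute_degree
  omega

lemma coeff_nu_q2Z (hm : P.coeff m = θ) : (nu (k := k) P (q2Z k)).coeff (m + 1) = θ := by
  rw [nu_q2Z, Polynomial.coeff_X_mul, hm]

lemma nu_linearCombination (hP : P.natDegree ≤ m) (hm : P.coeff m = θ) {W : ℕ}
    {c : ℕ × ℕ × Fin 2 →₀ k} (hc : ∀ M ∈ c.support, weight m M ≤ W) :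
    (nu P (Finsupp.linearCombination k (normalMonomial k) c)).natDegree ≤ W ∧
      (nu P (Finsupp.linearCombination k (normalMonomial k) c)).coeff W
        = weightPart m W c θ θ θ :=
  hasTopCoeff_toFinsuppIso_iff.mp <| hasTopCoeff_linearCombination
    (f := ((Polynomial.toFinsuppIsoAlg B).restrictScalars k).toAlgHom.comp (nu P))
    (hasTopCoeff_toFinsuppIso_iff.mpr ⟨natDegree_nu_q2X_le hP, coeff_nu_q2X hm⟩)
    (hasTopCoeff_toFinsuppIso_iff.mpr ⟨natDegree_nu_q2Y_le hP, coeff_nu_q2Y hm⟩)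
    (hasTopCoeff_toFinsuppIso_iff.mpr ⟨natDegree_nu_q2Z_le hP, coeff_nu_q2Z hm⟩) hc

lemma natDegree_nu_linearCombination (hP : P.natDegree ≤ m) (hm : P.coeff m = θ) {W : ℕ}
    {c : ℕ × ℕ × Fin 2 →₀ k} (hc : ∀ M ∈ c.support, weight m M ≤ W)
    (hθ : weightPart m W c θ θ θ ≠ 0) :
    (nu P (Finsupp.linearCombination k (normalMonomial k) c)).natDegree = W := by
  obtain ⟨hle, hcoeff⟩ := nu_linearCombination hP hm hc
  exact hle.antisymm (Polynomial.le_natDegree_of_ne_zero (hcoeff ▸ hθ))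

lemma exists_linearCombination_eq (m : ℕ) {a : Q2Ring k} (ha : a ≠ 0) :
    ∃ (c : ℕ × ℕ × Fin 2 →₀ k) (W : ℕ), Finsupp.linearCombination k (normalMonomial k) c = a ∧
      (∀ M ∈ c.support, weight m M ≤ W) ∧ ∃ M ∈ c.support, weight m M = W := by
  obtain ⟨c, rfl⟩ := linearCombination_normalMonomial_surjective a
  have hc : c.support.Nonempty := Finsupp.support_nonempty_iff.mpr fun h => ha (by simp [h])
  obtain ⟨N, hN, hmax⟩ := c.support.exists_max_image (weight m) hc
  exact ⟨c, weight m N, rfl, hmax, N, hN, rfl⟩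

lemma nu_injective (hP : P.natDegree ≤ m) (hm : Transcendental k (P.coeff m)) :
    Function.Injective (nu (k := k) P) := by
  refine (injective_iff_map_eq_zero _).mpr fun a ha => by_contra fun ha0 => ?_
  obtain ⟨c, W, rfl, hc, hW⟩ := exists_linearCombination_eq m ha0
  refine weightPart_ne_zero hW hm ?_
  rw [← (nu_linearCombination hP rfl hc).2, ha, Polynomial.coeff_zero]

end Nu

section WeightDegree

variable {k : Type*} [Field k] {m : ℕ}

/-- The weighted degree of `a ∈ A`: the largest `weight` of a monomial in its normal form. It is
computed as the degree of the image of `a` under `ν_P` for `P = T tᵐ`, `T` transcendental. -/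
def weightDegree (m : ℕ) (a : Q2Ring k) : ℕ :=
  (nu (Polynomial.C Polynomial.X * Polynomial.X ^ m : k[X][X]) a).natDegree

lemma nu_C_X_mul_X_pow_injective (m : ℕ) : Function.Injective
    (nu (k := k) (Polynomial.C Polynomial.X * Polynomial.X ^ m : k[X][X])) :=
  nu_injective (Polynomial.natDegree_C_mul_X_pow_le _ _)
    (by simpa using Polynomial.transcendental_X k)

instance : NoZeroDivisors (Q2Ring k) :=
  (nu_C_X_mul_X_pow_injective 0).noZeroDivisors _ (map_zero _) (map_mul _)

lemma weightDegree_linearCombination {c : ℕ × ℕ × Fin 2 →₀ k} {W : ℕ}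
    (hc : ∀ M ∈ c.support, weight m M ≤ W) (hW : ∃ M ∈ c.support, weight m M = W) :
    weightDegree m (Finsupp.linearCombination k (normalMonomial k) c) = W :=
  natDegree_nu_linearCombination (Polynomial.natDegree_C_mul_X_pow_le _ _)
    ((Polynomial.coeff_C_mul_X_pow ..).trans (if_pos rfl)) hc
    (weightPart_ne_zero hW (Polynomial.transcendental_X k))

lemma exists_linearCombination_eq_weightDegree (m : ℕ) {a : Q2Ring k} (ha : a ≠ 0) :
    ∃ c : ℕ × ℕ × Fin 2 →₀ k, Finsupp.linearCombination k (normalMonomial k) c = a ∧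
      (∀ M ∈ c.support, weight m M ≤ weightDegree m a) ∧
      ∃ M ∈ c.support, weight m M = weightDegree m a := by
  obtain ⟨c, W, rfl, hc, hW⟩ := exists_linearCombination_eq m ha
  rw [weightDegree_linearCombination hc hW]
  exact ⟨c, rfl, hc, hW⟩

lemma weightDegree_mul {a b : Q2Ring k} (ha : a ≠ 0) (hb : b ≠ 0) :
    weightDegree m (a * b) = weightDegree m a + weightDegree m b := by
  have hne {a : Q2Ring k} (ha : a ≠ 0) :=
    (map_ne_zero_iff _ (nu_C_X_mul_X_pow_injective (k := k) m)).mpr ha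
  rw [weightDegree, map_mul, Polynomial.natDegree_mul (hne ha) (hne hb)]
  rfl

lemma weightDegree_add_one (a : Q2Ring k) : weightDegree m (a + 1) = weightDegree m a := by
  rw [weightDegree, map_add, map_one, ← Polynomial.C_1, Polynomial.natDegree_add_C, weightDegree]

lemma natDegree_nu_le_weightDegree {p : k[X]} (hp : p.natDegree ≤ m) (a : Q2Ring k) :
    (nu p a).natDegree ≤ weightDegree m a := by
  rcases eq_or_ne a 0 with rfl | ha
  · simp
  obtain ⟨c, hca, hc, -⟩ := exists_linearCombination_eq_weightDegree m ha
  exact hca ▸ (nu_linearCombination hp rfl hc).1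

lemma le_weightDegree {a : Q2Ring k} (h : weightDegree m a ≠ 0) : m ≤ weightDegree m a := by
  have ha : a ≠ 0 := by
    rintro rfl
    simp [weightDegree] at h
  obtain ⟨c, -, -, M, -, hM⟩ := exists_linearCombination_eq_weightDegree m ha
  rw [← hM] at h ⊢
  by_contra! hlt
  simp only [weight] at h hlt
  have : M.1 = 0 := by nlinarith
  have : M.2.1 = 0 := by nlinarith
  have : (M.2.2 : ℕ) = 0 := by nlinarith
  simp_all

end WeightDegree

end Q2Ring

section Flow

open scoped Polynomial

/-- `f` is invariant under some nontrivial family `φ_s : A → A` of endomorphisms, polynomial in the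
parameter `s` and with `φ_0 = id`; the family is encoded as a homomorphism `A → A[s]`. Functions
invariant under a nontrivial action of the additive group have this property. -/
def IsFlowInvariant (k : Type*) {A : Type*} [CommSemiring k] [CommSemiring A] [Algebra k A]
    (f : A) : Prop :=
  ∃ φ : A →ₐ[k] A[X], (∀ a, (φ a).coeff 0 = a) ∧ φ f = Polynomial.C f ∧
    ∃ b, φ b ≠ Polynomial.C b

lemma IsFlowInvariant.map {k A B : Type*} [CommSemiring k] [CommSemiring A] [CommSemiring B]
    [Algebra k A] [Algebra k B] {f : A} (hf : IsFlowInvariant k f) (α : A ≃ₐ[k] B) :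
    IsFlowInvariant k (α f) := by
  obtain ⟨φ, h0, hφ, b, hb⟩ := hf
  refine ⟨(Polynomial.mapAlgHom α.toAlgHom).comp (φ.comp α.symm.toAlgHom), fun a => ?_, ?_,
    α b, fun h => hb ?_⟩
  · simp [h0]
  · simp [hφ]
  · refine Polynomial.map_injective α.toRingEquiv.toRingHom α.injective ?_
    simpa using h

variable {k : Type*} [Field k]

lemma isFlowInvariant_q2Y : IsFlowInvariant k (q2Y k) := by
  let φ : Q2Ring k →ₐ[k] (Q2Ring k)[X] := Q2Ring.lift
    (Polynomial.C (q2X k) + Polynomial.X * Polynomial.C (2 * q2Z k + 1)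
      + Polynomial.X ^ 2 * Polynomial.C (q2Y k))
    (Polynomial.C (q2Y k)) (Polynomial.C (q2Z k) + Polynomial.X * Polynomial.C (q2Y k)) (by
      have := congrArg Polynomial.C (Q2Ring.q2X_mul_q2Y (k := k))
      simp only [map_mul, map_add, map_one, map_ofNat] at this ⊢
      linear_combination this)
  have h0 : ((Polynomial.aeval (0 : Q2Ring k)).restrictScalars k).comp φ = AlgHom.id k _ :=
    Q2Ring.algHom_ext (by simp [φ]) (by simp [φ]) (by simp [φ])
  have hY : q2Y k ≠ 0 := fun h => by
    simpa [h] using (Q2Ring.lift_q2Y (k := k) (0 : k) 1 0 (by simp)).symm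
  refine ⟨φ, fun a => ?_, Q2Ring.lift_q2Y .., q2Z k, fun h => hY ?_⟩
  · rw [Polynomial.coeff_zero_eq_aeval_zero]
    exact DFunLike.congr_fun h0 a
  · simpa [φ] using congrArg (Polynomial.coeff · 1) h

/-- The automorphism of `A` exchanging `X` and `Y`. -/
def Q2Ring.swap (k : Type*) [Field k] : Q2Ring k ≃ₐ[k] Q2Ring k :=
  have h := (mul_comm _ _).trans (Q2Ring.q2X_mul_q2Y (k := k))
  .ofAlgHom (Q2Ring.lift (q2Y k) (q2X k) (q2Z k) h) (Q2Ring.lift (q2Y k) (q2X k) (q2Z k) h)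
    (Q2Ring.algHom_ext (by simp) (by simp) (by simp))
    (Q2Ring.algHom_ext (by simp) (by simp) (by simp))

lemma isFlowInvariant_q2X : IsFlowInvariant k (q2X k) := by
  have : Q2Ring.swap k (q2Y k) = q2X k := by simp [Q2Ring.swap]
  exact this ▸ isFlowInvariant_q2Y.map (Q2Ring.swap k)

end Flow

namespace Q2Ring

open scoped Polynomial Differential

section Rigidity

variable {k B : Type*} [Field k] [CommRing B] [Algebra k B]

/-- A nonconstant polynomial arc on the cone `x y = z²` that starts at the point `(θ, θ, θ)`. As
`x y = z²` is the part of top weight of `X Y = Z (Z + 1)`, such arcs are limits of flow lines. -/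
structure IsConeArc (θ : B) (x y z : B[X]) : Prop where
  coeff_zero_x : x.coeff 0 = θ
  coeff_zero_y : y.coeff 0 = θ
  coeff_zero_z : z.coeff 0 = θ
  mul_eq_sq : x * y = z ^ 2
  nonconstant : ¬(x.natDegree = 0 ∧ y.natDegree = 0 ∧ z.natDegree = 0)

lemma exists_natDegree_ne_zero {f : Q2Ring k →ₐ[k] B} {Φ : Q2Ring k →ₐ[k] B[X]}
    (h0 : ∀ a, (Φ a).coeff 0 = f a) (hΦ : ∃ a, Φ a ≠ Polynomial.C (f a)) :
    ∃ g : Fin 3, (Φ (![q2X k, q2Y k, q2Z k] g)).natDegree ≠ 0 := by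
  by_contra! h
  have hC (g : Fin 3) : Φ (![q2X k, q2Y k, q2Z k] g)
      = Polynomial.C (f (![q2X k, q2Y k, q2Z k] g)) :=
    h0 _ ▸ Polynomial.eq_C_of_natDegree_eq_zero (h g)
  have hΦC : Φ = ((Polynomial.CAlgHom (R := B)).restrictScalars k).comp f :=
    algHom_ext (hC 0) (hC 1) (hC 2)
  obtain ⟨a, ha⟩ := hΦ
  exact ha (DFunLike.congr_fun hΦC a)

lemma exists_isConeArc {m : ℕ} {P : B[X]} {θ : B} (hP : P.natDegree ≤ m)
    (hm : P.coeff m = θ) {Φ : Q2Ring k →ₐ[k] B[X][X]} (h0 : ∀ a, (Φ a).coeff 0 = nu P a)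
    (hΦ : ∃ a, Φ a ≠ Polynomial.C (nu P a)) {c : ℕ × ℕ × Fin 2 →₀ k} {W : ℕ}
    (hc : ∀ M ∈ c.support, weight m M ≤ W)
    (hinv : Φ (Finsupp.linearCombination k (normalMonomial k) c)
      = Polynomial.C (nu P (Finsupp.linearCombination k (normalMonomial k) c))) :
    ∃ x y z : B[X], IsConeArc θ x y z ∧
      weightPart m W c x y z = Polynomial.C (weightPart m W c θ θ θ) := by
  let gen : Fin 3 → Q2Ring k := ![q2X k, q2Y k, q2Z k]
  let d : Fin 3 → ℕ := ![m + 2, m, m + 1]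
  have hgen (g : Fin 3) : ((Φ (gen g)).coeff 0).natDegree ≤ d g ∧
      ((Φ (gen g)).coeff 0).coeff (d g) = θ := by
    rw [h0]
    fin_cases g
    · exact ⟨natDegree_nu_q2X_le hP, coeff_nu_q2X hm⟩
    · exact ⟨natDegree_nu_q2Y_le hP, coeff_nu_q2Y hm⟩
    · exact ⟨natDegree_nu_q2Z_le hP, coeff_nu_q2Z hm⟩
  obtain ⟨κ, htop, hdeg⟩ := exists_slope (P := fun g => Φ (gen g)) (d := fun g => d g)
    (fun g => Nat.cast_le.mpr (hgen g).1) (exists_natDegree_ne_zero h0 hΦ)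
  have hedge0 (g : Fin 3) : (edgePolynomial κ (d g) (Φ (gen g))).coeff 0 = θ :=
    (coeff_zero_edgePolynomial κ (hgen g).1).trans (hgen g).2
  let f := ((slopeSubst κ).restrictScalars k).comp Φ
  refine ⟨_, _, _, ⟨hedge0 0, hedge0 1, hedge0 2,
    mul_eq_sq_of_hasTopCoeff (f := f) (htop 0) (htop 1) (htop 2), ?_⟩,
    (hasTopCoeff_linearCombination (f := f) (htop 0) (htop 1) (htop 2) hc).eq ?_⟩
  · rintro ⟨hx, hy, hz⟩
    obtain ⟨g, hg⟩ := hdeg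
    fin_cases g
    exacts [hg hx, hg hy, hg hz]
  · obtain ⟨hle, hcoeff⟩ := nu_linearCombination hP hm hc
    change HasTopCoeff (slopeSubst κ (Φ _)) _ _
    rw [hinv, slopeSubst_C, ← hcoeff]
    exact hasTopCoeff_aeval_single hle

lemma IsConeArc.weightPart_ne_zero {K : Type*} [Field K] [Algebra k K] [Differential K]
    {x y z : K[X]} {l w : K} (hl : l ≠ 0) (hw : w ≠ 0) (hw' : w′ ≠ 0)
    (h : IsConeArc (l * w ^ 2) x y z) {m W : ℕ} (hm : 3 ≤ m) (hW : W ≠ 0)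
    {c : ℕ × ℕ × Fin 2 →₀ k} (hunit : IsUnit (weightPart m W c x y z)) :
    weightPart m W c l l l ≠ 0 := by
  intro hsum
  have hCl : Polynomial.C l * Polynomial.C l⁻¹ = 1 := by
    rw [← Polynomial.C_mul, mul_inv_cancel₀ hl, Polynomial.C_1]
  have hcoeff {f : K[X]} (hf : f.coeff 0 = l * w ^ 2) :
      (Polynomial.C l⁻¹ * f).coeff 0 = w ^ 2 := by
    rw [Polynomial.coeff_C_mul, hf, inv_mul_cancel_left₀ hl]
  have hscale (f : K[X]) : f = Polynomial.C l * (Polynomial.C l⁻¹ * f) := by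
    rw [← mul_assoc, hCl, one_mul]
  have := natDegree_eq_zero_of_isUnit_weighted_sum hw hw' (hcoeff h.coeff_zero_x)
    (hcoeff h.coeff_zero_y) (hcoeff h.coeff_zero_z)
    (by linear_combination Polynomial.C l⁻¹ ^ 2 * h.mul_eq_sq) hm hW
    (s := {M ∈ c.support | weight m M = W})
    (c := fun M => c M • (l ^ M.1 * l ^ M.2.1 * l ^ (M.2.2 : ℕ)))
    (i := fun M => M.1) (j := fun M => M.2.1) (e := fun M => (M.2.2 : ℕ))
    (fun M hM => (Finset.mem_filter.mp hM).2) hsum (by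
      convert! hunit using 1
      refine Finset.sum_congr rfl fun M _ => ?_
      conv_rhs => rw [hscale x, hscale y, hscale z]
      simp only [mul_pow, Polynomial.C_mul, Polynomial.C_pow, ← Polynomial.smul_C, smul_mul_assoc]
      ring_nf)
  simp only [Polynomial.natDegree_C_mul (inv_ne_zero hl)] at this
  exact h.nonconstant this

lemma exists_isConeArc_of_isFlowInvariant {θ : B} (hθ : Transcendental k θ) {m W : ℕ}
    {c : ℕ × ℕ × Fin 2 →₀ k} (hc : ∀ M ∈ c.support, weight m M ≤ W)
    (hf : IsFlowInvariant k (Finsupp.linearCombination k (normalMonomial k) c)) :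
    ∃ x y z : B[X], IsConeArc θ x y z ∧
      weightPart m W c x y z = Polynomial.C (weightPart m W c θ θ θ) := by
  let P : B[X] := Polynomial.C θ * Polynomial.X ^ m
  have hP : P.natDegree ≤ m := Polynomial.natDegree_C_mul_X_pow_le _ _
  have hPm : P.coeff m = θ := (Polynomial.coeff_C_mul_X_pow ..).trans (if_pos rfl)
  have hnu : Function.Injective (nu (k := k) P) := nu_injective hP (hPm.symm ▸ hθ)
  obtain ⟨φ, hφ0, hφf, b, hb⟩ := hf
  exact exists_isConeArc hP hPm (Φ := (Polynomial.mapAlgHom (nu P)).comp φ)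
    (fun a => by simp [hφ0])
    ⟨b, fun h => hb (Polynomial.map_injective (nu P).toRingHom hnu (by simpa using h))⟩
    hc (by simp [hφf])

lemma transcendental_algebraMap_C_mul_X_sq (K : Type*) [Field K] [Algebra k K] [Algebra k[X] K]
    [IsScalarTower k k[X] K] [IsFractionRing k[X] K] {l : k} (hl : l ≠ 0) :
    Transcendental k (algebraMap k K l * algebraMap k[X] K Polynomial.X ^ 2) := by
  have h : Transcendental k (algebraMap k[X] K (Polynomial.C l * Polynomial.X ^ 2)) :=
    (transcendental_algebraMap_iff (IsFractionRing.injective k[X] K)).mpr <|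
      Polynomial.transcendental _ (by simp [hl]) (by simpa [Polynomial.leadingCoeff_mul] using hl)
  simpa [IsScalarTower.algebraMap_apply k k[X] K] using h

theorem weightPart_ne_zero_of_isFlowInvariant {m : ℕ} (hm : 3 ≤ m) {c : ℕ × ℕ × Fin 2 →₀ k}
    {W : ℕ} (hW : W ≠ 0) (hc : ∀ M ∈ c.support, weight m M ≤ W)
    (hcW : ∃ M ∈ c.support, weight m M = W)
    (hf : IsFlowInvariant k (Finsupp.linearCombination k (normalMonomial k) c)) {l : k}
    (hl : l ≠ 0) : weightPart m W c l l l ≠ 0 := by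
  let K := FractionRing k[X]
  obtain ⟨_, hX'⟩ := exists_differential_X_eq_one k K
  have hX : algebraMap k[X] K Polynomial.X ≠ 0 := by simp
  have hθ := transcendental_algebraMap_C_mul_X_sq K hl
  obtain ⟨x, y, z, harc, htop⟩ := exists_isConeArc_of_isFlowInvariant hθ hc hf
  have hunit : IsUnit (weightPart m W c x y z) :=
    htop ▸ Polynomial.isUnit_C.mpr (weightPart_ne_zero hcW hθ).isUnit
  have hK := harc.weightPart_ne_zero ((map_ne_zero _).mpr hl) hX (hX' ▸ one_ne_zero) hm hW hunit
  exact fun h => hK (by simpa [h] using (map_weightPart (Algebra.ofId k K) m W c l l l).symm)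

theorem natDegree_nu_eq_weightDegree {f : Q2Ring k} (hf : IsFlowInvariant k f) {p : k[X]}
    (hp : 3 ≤ p.natDegree) : (nu p f).natDegree = weightDegree p.natDegree f := by
  rcases eq_or_ne f 0 with rfl | hf0
  · simp [weightDegree]
  obtain ⟨c, hcf, hc, hcW⟩ := exists_linearCombination_eq_weightDegree p.natDegree hf0
  rcases eq_or_ne (weightDegree p.natDegree f) 0 with hW | hW
  · have := natDegree_nu_le_weightDegree le_rfl (p := p) f
    omega
  have hlead := weightPart_ne_zero_of_isFlowInvariant hp hW hc hcW (hcf ▸ hf)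
    (l := p.leadingCoeff) (Polynomial.leadingCoeff_ne_zero.mpr (by rintro rfl; simp at hp))
  have := natDegree_nu_linearCombination le_rfl rfl hc hlead
  rwa [hcf] at this

end Rigidity

end Q2Ring

section PolynomialAutomorphism

open scoped Polynomial

lemma algHom_eq_comp {R : Type*} [CommSemiring R] (β : R[X] →ₐ[R] R[X]) (f : R[X]) :
    β f = f.comp (β Polynomial.X) := by
  rw [Polynomial.comp_eq_aeval, Polynomial.aeval_algHom_apply, Polynomial.aeval_X_left_apply]

variable {R : Type*} [CommRing R] [IsDomain R] (β : R[X] ≃ₐ[R] R[X])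

lemma natDegree_algEquiv_X : (β Polynomial.X).natDegree = 1 := by
  have h : (β.symm Polynomial.X).comp (β Polynomial.X) = Polynomial.X :=
    (algHom_eq_comp β.toAlgHom _).symm.trans (β.apply_symm_apply _)
  have := congrArg Polynomial.natDegree h
  rw [Polynomial.natDegree_comp, Polynomial.natDegree_X] at this
  exact Nat.eq_one_of_mul_eq_one_left this

lemma natDegree_algEquiv (f : R[X]) : (β f).natDegree = f.natDegree := by
  rw [show β f = _ from algHom_eq_comp β.toAlgHom f, Polynomial.natDegree_comp]
  exact (congrArg _ (natDegree_algEquiv_X β)).trans (mul_one _)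

lemma exists_algEquiv_X_eq :
    ∃ l μ : R, l ≠ 0 ∧ β Polynomial.X = Polynomial.C l * Polynomial.X + Polynomial.C μ := by
  have hdeg := natDegree_algEquiv_X β
  obtain ⟨l, μ, h⟩ := Polynomial.exists_eq_X_add_C_of_natDegree_le_one hdeg.le
  refine ⟨l, μ, ?_, h⟩
  rintro rfl
  simp [h] at hdeg

end PolynomialAutomorphism

section Comparison

open scoped Polynomial

variable {R : Type*} [CommRing R] [IsDomain R] {p : R[X]}

lemma eq_zero_of_add_mul_eq_zero {f g : R[X]} (hf : f.natDegree < p.natDegree)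
    (h : f + g * p = 0) : f = 0 ∧ g = 0 := by
  have hf0 : f = 0 := Polynomial.eq_zero_of_dvd_of_natDegree_lt
    ⟨-g, by linear_combination h⟩ hf
  have hp0 : p ≠ 0 := by
    rintro rfl
    simp at hf
  refine ⟨hf0, (mul_eq_zero.mp ?_).resolve_right hp0⟩
  simpa [hf0] using h

lemma eq_zero_of_linear_add_quadratic_mul_eq_zero (hp : 2 ≤ p.natDegree) {a₀ a₁ b₀ b₁ b₂ : R}
    (h : Polynomial.C a₁ * Polynomial.X + Polynomial.C a₀ + (Polynomial.C b₂ * Polynomial.X ^ 2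
      + Polynomial.C b₁ * Polynomial.X + Polynomial.C b₀) * p = 0) :
    a₀ = 0 ∧ a₁ = 0 ∧ b₀ = 0 ∧ b₁ = 0 ∧ b₂ = 0 := by
  obtain ⟨ha, hb⟩ := eq_zero_of_add_mul_eq_zero (Polynomial.natDegree_linear_le.trans_lt hp) h
  refine ⟨?_, ?_, ?_, ?_, ?_⟩
  · simpa using congrArg (Polynomial.coeff · 0) ha
  · simpa using congrArg (Polynomial.coeff · 1) ha
  · simpa using congrArg (Polynomial.coeff · 0) hb
  · simpa using congrArg (Polynomial.coeff · 1) hb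
  · simpa [Polynomial.coeff_X, Polynomial.coeff_C] using congrArg (Polynomial.coeff · 2) hb

lemma coefficients_eq_of_affine_substitution {k : Type*} [Field k] {p : k[X]}
    (hp : 2 ≤ p.natDegree)
    {l μ yY y₀ zY zZ z₀ xX xY xZ x₀ : k} (hl : l ≠ 0) {L Q : k[X]}
    (hL : L = Polynomial.C l * Polynomial.X + Polynomial.C μ)
    (hY : Q = Polynomial.C yY * p + Polynomial.C y₀)
    (hZ : L * Q = Polynomial.C zY * p + Polynomial.C zZ * (Polynomial.X * p) + Polynomial.C z₀)
    (hX : L * (1 + L * Q) = Polynomial.C xX * (Polynomial.X * (1 + Polynomial.X * p))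
      + Polynomial.C xY * p + Polynomial.C xZ * (Polynomial.X * p) + Polynomial.C x₀) :
    (yY = l⁻¹ ∧ y₀ = 0) ∧ (zY = μ / l ∧ zZ = 1 ∧ z₀ = 0) ∧
      (xX = l ∧ xY = μ ^ 2 / l ∧ xZ = 2 * μ ∧ x₀ = μ) := by
  subst hL hY
  obtain ⟨hz₀, hy₀, hzY, hzZ, -⟩ := eq_zero_of_linear_add_quadratic_mul_eq_zero hp
    (a₀ := μ * y₀ - z₀) (a₁ := l * y₀) (b₀ := μ * yY - zY) (b₁ := l * yY - zZ) (b₂ := 0) (by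
      simp only [map_sub, map_mul, map_zero]
      linear_combination hZ)
  obtain rfl : y₀ = 0 := (mul_eq_zero.mp hy₀).resolve_left hl
  obtain ⟨hx₀, hxX, hxY, hxZ, hyY⟩ := eq_zero_of_linear_add_quadratic_mul_eq_zero hp
    (a₀ := μ - x₀) (a₁ := l - xX) (b₀ := μ ^ 2 * yY - xY) (b₁ := 2 * l * μ * yY - xZ)
    (b₂ := l ^ 2 * yY - xX) (by
      simp only [map_sub, map_mul, map_pow, map_ofNat, map_zero] at hX ⊢
      linear_combination hX)
  obtain rfl : yY = l⁻¹ := eq_inv_of_mul_eq_one_right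
    (mul_left_cancel₀ hl (by linear_combination hyY - hxX))
  refine ⟨⟨rfl, rfl⟩, ⟨?_, ?_, ?_⟩, ?_, ?_, ?_, ?_⟩
  · linear_combination -hzY
  · linear_combination mul_inv_cancel₀ hl - hzZ
  · linear_combination -hz₀
  · linear_combination -hxX
  · linear_combination -hxY
  · linear_combination 2 * μ * mul_inv_cancel₀ hl - hxZ
  · linear_combination -hx₀

end Comparison

namespace Q2Ring

open scoped Polynomial

section Automorphism

variable {k : Type*} [Field k]

lemma mem_of_weight_le {m : ℕ} (hm : 3 ≤ m) {M : ℕ × ℕ × Fin 2} (hM : weight m M ≤ m + 2) :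
    M ∈ ({(1, 0, 0), (0, 1, 0), (0, 0, 1), (0, 0, 0)} : Finset (ℕ × ℕ × Fin 2)) := by
  obtain ⟨i, j, e⟩ := M
  simp only [weight] at hM
  have hsum : i + j + (e : ℕ) ≤ 1 := by
    by_contra! h
    nlinarith
  simp only [Finset.mem_insert, Finset.mem_singleton, Prod.mk.injEq, Fin.ext_iff, Fin.val_zero,
    Fin.val_one]
  omega

lemma exists_eq_of_weightDegree_le {m : ℕ} (hm : 3 ≤ m) {a : Q2Ring k}
    (ha : weightDegree m a ≤ m + 2) :
    ∃ x y z r : k, a = algebraMap k _ x * q2X k + algebraMap k _ y * q2Y k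
        + algebraMap k _ z * q2Z k + algebraMap k _ r ∧
      (x ≠ 0 → m + 2 ≤ weightDegree m a) ∧ (z ≠ 0 → m + 1 ≤ weightDegree m a) := by
  rcases eq_or_ne a 0 with rfl | ha0
  · exact ⟨0, 0, 0, 0, by simp⟩
  obtain ⟨c, rfl, hc, -⟩ := exists_linearCombination_eq_weightDegree m ha0
  refine ⟨c (1, 0, 0), c (0, 1, 0), c (0, 0, 1), c (0, 0, 0), ?_, fun h => ?_, fun h => ?_⟩
  · rw [Finsupp.linearCombination_apply, Finsupp.sum_of_support_subset c
      (fun M hM => mem_of_weight_le hm ((hc M hM).trans ha)) _ (by simp)]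
    simp [normalMonomial, Algebra.algebraMap_eq_smul_one, add_assoc]
  · simpa [weight] using hc _ (Finsupp.mem_support_iff.mpr h)
  · simpa [weight] using hc _ (Finsupp.mem_support_iff.mpr h)

lemma natDegree_nu_q2X {p : k[X]} (hp : p ≠ 0) :
    (nu (k := k) p (q2X k)).natDegree = p.natDegree + 2 := by
  refine (natDegree_nu_q2X_le le_rfl).antisymm (Polynomial.le_natDegree_of_ne_zero ?_)
  rwa [coeff_nu_q2X rfl, Polynomial.coeff_natDegree, Polynomial.leadingCoeff_ne_zero]

variable {p q : k[X]} {α : Q2Ring k ≃ₐ[k] Q2Ring k} {β : k[X] ≃ₐ[k] k[X]}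

lemma weightDegree_map (hp : 3 ≤ p.natDegree) (h : ∀ a, nu p (α a) = β (nu q a)) {f : Q2Ring k}
    (hf : IsFlowInvariant k f) : weightDegree p.natDegree (α f) = (nu q f).natDegree := by
  rw [← natDegree_nu_eq_weightDegree (hf.map α) hp, h, natDegree_algEquiv]

lemma natDegree_le_of_nu_comp_eq (hp : 3 ≤ p.natDegree) (hq : q.natDegree ≠ 0)
    (h : ∀ a, nu p (α a) = β (nu q a)) : p.natDegree ≤ q.natDegree := by
  have hY : weightDegree p.natDegree (α (q2Y k)) = q.natDegree :=
    (weightDegree_map hp h isFlowInvariant_q2Y).trans (by rw [nu_q2Y])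
  rw [← hY] at hq ⊢
  exact le_weightDegree hq

lemma natDegree_eq_of_nu_comp_eq (hp : 3 ≤ p.natDegree) (hq : 3 ≤ q.natDegree)
    (h : ∀ a, nu p (α a) = β (nu q a)) : p.natDegree = q.natDegree := by
  refine (natDegree_le_of_nu_comp_eq hp (by omega) h).antisymm
    (natDegree_le_of_nu_comp_eq (α := α.symm) (β := β.symm) hq (by omega) fun a => ?_)
  rw [← β.injective.eq_iff, ← h, α.apply_symm_apply, β.apply_symm_apply]

lemma weightDegree_map_q2Z {m d : ℕ} (hd : d ≠ 0) (hX : weightDegree m (α (q2X k)) = d + 2)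
    (hY : weightDegree m (α (q2Y k)) = d) : weightDegree m (α (q2Z k)) = d + 1 := by
  have hne {a : Q2Ring k} (h : weightDegree m a ≠ 0) : a ≠ 0 := by
    rintro rfl
    simp [weightDegree] at h
  have hX0 : α (q2X k) ≠ 0 := hne (by omega)
  have hY0 : α (q2Y k) ≠ 0 := hne (by omega)
  have hmul : α (q2X k) * α (q2Y k) = α (q2Z k) * (α (q2Z k) + 1) := by
    rw [← map_mul, q2X_mul_q2Y, map_mul, map_add, map_one]
  have hZ : α (q2Z k) * (α (q2Z k) + 1) ≠ 0 := hmul ▸ mul_ne_zero hX0 hY0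
  have := congrArg (weightDegree m) hmul
  rw [weightDegree_mul hX0 hY0, weightDegree_mul (left_ne_zero_of_mul hZ)
    (right_ne_zero_of_mul hZ), weightDegree_add_one, hX, hY] at this
  omega

lemma exists_linear_map_eq (hp : 3 ≤ p.natDegree) (hq : 3 ≤ q.natDegree)
    (h : ∀ a, nu p (α a) = β (nu q a)) :
    (∃ xX xY xZ x₀ : k, α (q2X k) = algebraMap k _ xX * q2X k + algebraMap k _ xY * q2Y k
      + algebraMap k _ xZ * q2Z k + algebraMap k _ x₀) ∧
    (∃ yY y₀ : k, α (q2Y k) = algebraMap k _ yY * q2Y k + algebraMap k _ y₀) ∧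
    (∃ zY zZ z₀ : k, α (q2Z k) = algebraMap k _ zY * q2Y k + algebraMap k _ zZ * q2Z k
      + algebraMap k _ z₀) := by
  have hdeg := natDegree_eq_of_nu_comp_eq hp hq h
  have hq0 : q ≠ 0 := Polynomial.ne_zero_of_natDegree_gt hq
  have hX : weightDegree p.natDegree (α (q2X k)) = p.natDegree + 2 := by
    rw [weightDegree_map hp h isFlowInvariant_q2X, natDegree_nu_q2X hq0, hdeg]
  have hY : weightDegree p.natDegree (α (q2Y k)) = p.natDegree := by
    rw [weightDegree_map hp h isFlowInvariant_q2Y, nu_q2Y, hdeg]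
  have hZ := weightDegree_map_q2Z (by omega) hX hY
  refine ⟨?_, ?_, ?_⟩
  · obtain ⟨x, y, z, r, hα, -⟩ := exists_eq_of_weightDegree_le hp hX.le
    exact ⟨x, y, z, r, hα⟩
  · obtain ⟨x, y, z, r, hα, hx, hz⟩ := exists_eq_of_weightDegree_le hp (hY.trans_le (by omega))
    obtain rfl : x = 0 := of_not_not fun hx0 => by have := hx hx0; omega
    obtain rfl : z = 0 := of_not_not fun hz0 => by have := hz hz0; omega
    exact ⟨y, r, by simpa using hα⟩
  · obtain ⟨x, y, z, r, hα, hx, -⟩ := exists_eq_of_weightDegree_le hp (hZ.trans_le (by omega))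
    obtain rfl : x = 0 := of_not_not fun hx0 => by have := hx hx0; omega
    exact ⟨y, z, r, by simpa using hα⟩

lemma map_eq_of_nu_comp_eq (hp : 3 ≤ p.natDegree) (hq : 3 ≤ q.natDegree)
    (h : ∀ a, nu p (α a) = β (nu q a)) {l μ : k} (hl : l ≠ 0)
    (hβ : β Polynomial.X = Polynomial.C l * Polynomial.X + Polynomial.C μ) :
    α (q2X k) = algebraMap k _ l * q2X k + algebraMap k _ (μ ^ 2 / l) * q2Y k
        + algebraMap k _ (2 * μ) * q2Z k + algebraMap k _ μ ∧
      α (q2Y k) = algebraMap k _ l⁻¹ * q2Y k ∧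
      α (q2Z k) = q2Z k + algebraMap k _ (μ / l) * q2Y k := by
  obtain ⟨⟨xX, xY, xZ, x₀, hX⟩, ⟨yY, y₀, hY⟩, ⟨zY, zZ, z₀, hZ⟩⟩ := exists_linear_map_eq hp hq h
  have hνX := h (q2X k)
  have hνY := h (q2Y k)
  have hνZ := h (q2Z k)
  simp only [hX, hY, hZ, map_add, map_mul, map_one, AlgHom.commutes, nu_q2X, nu_q2Y, nu_q2Z,
    Polynomial.algebraMap_eq] at hνX hνY hνZ
  obtain ⟨⟨rfl, rfl⟩, ⟨rfl, rfl, rfl⟩, rfl, rfl, rfl, rfl⟩ :=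
    coefficients_eq_of_affine_substitution (by omega) hl hβ hνY.symm hνZ.symm hνX.symm
  refine ⟨hX, by simpa using hY, ?_⟩
  simpa [add_comm] using hZ

end Automorphism

end Q2Ring

/-- **Lemma 2.2(2) (Blanc–van Santen).** If `p, q ∈ k[t]` have degree `≥ 3` and
`ν_p ∘ α = β ∘ ν_q` for `k`-algebra automorphisms `α` of `A` and `β` of `k[t]`, then there are
`μ ∈ k` and `λ ∈ k*` with `p(t) = λ·q(λt+μ)`, `β(t) = λt+μ`, and
`α : X ↦ λX + (μ²/λ)Y + 2μZ + μ`, `Y ↦ (1/λ)Y`, `Z ↦ Z + (μ/λ)Y`. -/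
theorem automorphisms_relating_nu_p_nu_q (k : Type*) [Field k]
    (p q : Polynomial k) (hp : 3 ≤ p.natDegree) (hq : 3 ≤ q.natDegree)
    (νp νq : Q2Ring k →ₐ[k] Polynomial k)
    (hνpX : νp (q2X k) = Polynomial.X * (1 + Polynomial.X * p))
    (hνpY : νp (q2Y k) = p)
    (hνpZ : νp (q2Z k) = Polynomial.X * p)
    (hνqX : νq (q2X k) = Polynomial.X * (1 + Polynomial.X * q))
    (hνqY : νq (q2Y k) = q)
    (hνqZ : νq (q2Z k) = Polynomial.X * q)
    (hνpsurj : Function.Surjective νp) (hνqsurj : Function.Surjective νq)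
    (α : Q2Ring k ≃ₐ[k] Q2Ring k) (β : Polynomial k ≃ₐ[k] Polynomial k)
    (hcomm : νp.comp α.toAlgHom = β.toAlgHom.comp νq) :
    ∃ μ lam : k, lam ≠ 0 ∧
      p = Polynomial.C lam * q.comp (Polynomial.C lam * Polynomial.X + Polynomial.C μ) ∧
      β Polynomial.X = Polynomial.C lam * Polynomial.X + Polynomial.C μ ∧
      α (q2X k) = algebraMap k (Q2Ring k) lam * q2X k
          + algebraMap k (Q2Ring k) (μ ^ 2 / lam) * q2Y k
          + algebraMap k (Q2Ring k) (2 * μ) * q2Z k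
          + algebraMap k (Q2Ring k) μ ∧
      α (q2Y k) = algebraMap k (Q2Ring k) lam⁻¹ * q2Y k ∧
      α (q2Z k) = q2Z k + algebraMap k (Q2Ring k) (μ / lam) * q2Y k := by
  obtain rfl : νp = Q2Ring.nu p := Q2Ring.algHom_ext (by simp [hνpX]) (by simp [hνpY])
    (by simp [hνpZ])
  obtain rfl : νq = Q2Ring.nu q := Q2Ring.algHom_ext (by simp [hνqX]) (by simp [hνqY])
    (by simp [hνqZ])
  have h (a : Q2Ring k) : Q2Ring.nu p (α a) = β (Q2Ring.nu q a) := DFunLike.congr_fun hcomm a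
  obtain ⟨lam, μ, hlam, hβ⟩ := exists_algEquiv_X_eq β
  obtain ⟨hX, hY, hZ⟩ := Q2Ring.map_eq_of_nu_comp_eq hp hq h hlam hβ
  refine ⟨μ, lam, hlam, ?_, hβ, hX, hY, hZ⟩
  have hβq : β q = q.comp (β Polynomial.X) := algHom_eq_comp β.toAlgHom q
  have hp_eq : Polynomial.C lam⁻¹ * p = β q := by simpa [hY] using h (q2Y k)
  rw [← hβ, ← hβq, ← hp_eq, ← mul_assoc, ← Polynomial.C_mul, mul_inv_cancel₀ hlam,
    Polynomial.C_1, one_mul]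
end
end
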